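/- arXiv:2404.01275 — 8 statements merged into one kernel-verified Lean document; each statement's English description precedes it below -/
import Mathlib

section
/- Let J : X → Z be a bounded linear operator between pre-ordered Banach spaces. Then the dual operator J' : Z' → X' is bipositive with respect to the dual wedges if and only if J(X_+) is a dense subset of Z_+. -/
/-! `J'` pulls the dual wedge of `X₊` back to the dual wedge of `J(X₊)`, so bipositivity says that
`J(X₊)` and `Z₊` have the same dual wedge. By the bipolar theorem, the dual wedge of a wedge
determines, and is determined by, its closure; since `Z₊` is closed, the two wedges have the same
dual exactly when the closure of `J(X₊)` is `Z₊`. -/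

section DualWedge

variable {E : Type*} [AddCommMonoid E] [Module ℝ E] [TopologicalSpace E]

/-- The dual wedge of a set `s`: the continuous linear functionals that are nonnegative on `s`.
This is Mathlib's dual cone for the pairing of `E` with its continuous dual; it is defined for
arbitrary sets so that it applies directly to images `J '' s`. -/
def dualWedge (s : Set E) : PointedCone ℝ (StrongDual ℝ E) :=
  PointedCone.dual (topDualPairing ℝ E).flip s

theorem mem_dualWedge {s : Set E} {f : StrongDual ℝ E} :
    f ∈ dualWedge s ↔ ∀ x ∈ s, 0 ≤ f x :=
  Iff.rfl

theorem comp_mem_dualWedge_iff {F : Type*} [AddCommMonoid F] [Module ℝ F] [TopologicalSpace F]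
    {s : Set E} {J : E →L[ℝ] F} {f : StrongDual ℝ F} :
    f.comp J ∈ dualWedge s ↔ f ∈ dualWedge (J '' s) := by
  simp only [mem_dualWedge, Set.forall_mem_image, ContinuousLinearMap.comp_apply]

theorem nonneg_of_mem_closure_of_mem_dualWedge {s : Set E} {x : E} {f : StrongDual ℝ E}
    (hx : x ∈ closure s) (hf : f ∈ dualWedge s) : 0 ≤ f x :=
  closure_minimal (mem_dualWedge.1 hf) (isClosed_Ici.preimage f.continuous) hx

end DualWedge

section Bipolar

variable {E : Type*} [AddCommGroup E] [Module ℝ E] [TopologicalSpace E]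
  [IsTopologicalAddGroup E] [ContinuousSMul ℝ E] [LocallyConvexSpace ℝ E]

theorem mem_closure_iff_forall_mem_dualWedge_nonneg {C : PointedCone ℝ E} {x : E} :
    x ∈ closure (C : Set E) ↔ ∀ f ∈ dualWedge (C : Set E), 0 ≤ f x := by
  refine ⟨fun hx f hf ↦ nonneg_of_mem_closure_of_mem_dualWedge hx hf, fun hpos ↦ ?_⟩
  by_contra hx
  obtain ⟨f, hf, hfx⟩ := ProperCone.hyperplane_separation_point (Submodule.closure C) hx
  exact (hpos f fun y hy ↦ hf y (subset_closure hy)).not_gt hfx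

theorem dualWedge_le_dualWedge_iff_subset_closure {C : PointedCone ℝ E} {s : Set E} :
    dualWedge (C : Set E) ≤ dualWedge s ↔ s ⊆ closure (C : Set E) := by
  simp only [SetLike.le_def, Set.subset_def, mem_closure_iff_forall_mem_dualWedge_nonneg,
    mem_dualWedge (s := s)]
  exact ⟨fun h x hx f hf ↦ h hf x hx, fun h f hf x hx ↦ h x hx f hf⟩

theorem dualWedge_eq_dualWedge_iff {C : PointedCone ℝ E} {K : ProperCone ℝ E} :
    dualWedge (C : Set E) = dualWedge (K : Set E) ↔
      (C : Set E) ⊆ K ∧ (K : Set E) ⊆ closure (C : Set E) := by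
  have le_iff : dualWedge (K : Set E) ≤ dualWedge (C : Set E) ↔ (C : Set E) ⊆ K :=
    calc
      _ ↔ (C : Set E) ⊆ closure (K : Set E) :=
        dualWedge_le_dualWedge_iff_subset_closure (C := K.toPointedCone)
      _ ↔ _ := by rw [K.isClosed.closure_eq]
  rw [le_antisymm_iff, dualWedge_le_dualWedge_iff_subset_closure, le_iff, and_comm]

end Bipolar

theorem stmt_1_general {X Z : Type*}
    [AddCommMonoid X] [Module ℝ X] [TopologicalSpace X]
    [AddCommGroup Z] [Module ℝ Z] [TopologicalSpace Z]
    [IsTopologicalAddGroup Z] [ContinuousSMul ℝ Z] [LocallyConvexSpace ℝ Z]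
    (C : PointedCone ℝ X) (K : ProperCone ℝ Z) (J : X →L[ℝ] Z) :
    (∀ f : StrongDual ℝ Z, f.comp J ∈ dualWedge (C : Set X) ↔ f ∈ dualWedge (K : Set Z)) ↔
      J '' C ⊆ K ∧ (K : Set Z) ⊆ closure (J '' C) := by
  simp only [comp_mem_dualWedge_iff]
  rw [← SetLike.ext_iff]
  exact dualWedge_eq_dualWedge_iff (C := C.map (J : X →ₗ[ℝ] Z))

/-- Let `J : X → Z` be a bounded linear operator between pre-ordered Banach spaces.
Then the dual operator `J' : Z' → X'`, `z' ↦ z' ∘ J`, is bipositive with respect to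
the dual wedges if and only if `J '' Xp` is a dense subset of `Zp`. -/
theorem stmt_1
    {X Z : Type*}
    [NormedAddCommGroup X] [NormedSpace ℝ X] [CompleteSpace X]
    [NormedAddCommGroup Z] [NormedSpace ℝ Z] [CompleteSpace Z]
    (Xp : Set X) (hXclosed : IsClosed Xp) (hX0 : (0 : X) ∈ Xp)
    (hXadd : ∀ x ∈ Xp, ∀ y ∈ Xp, x + y ∈ Xp)
    (hXsmul : ∀ a : ℝ, 0 ≤ a → ∀ x ∈ Xp, a • x ∈ Xp)
    (Zp : Set Z) (hZclosed : IsClosed Zp) (hZ0 : (0 : Z) ∈ Zp)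
    (hZadd : ∀ x ∈ Zp, ∀ y ∈ Zp, x + y ∈ Zp)
    (hZsmul : ∀ a : ℝ, 0 ≤ a → ∀ x ∈ Zp, a • x ∈ Zp)
    (J : X →L[ℝ] Z) :
    (∀ z' : Z →L[ℝ] ℝ,
        (z'.comp J ∈ {x' : X →L[ℝ] ℝ | ∀ x ∈ Xp, 0 ≤ x' x}
          ↔ z' ∈ {z' : Z →L[ℝ] ℝ | ∀ z ∈ Zp, 0 ≤ z' z}))
      ↔ (J '' Xp ⊆ Zp ∧ Zp ⊆ closure (J '' Xp)) := by
  let C : PointedCone ℝ X := .ofConeComb Xp ⟨0, hX0⟩ fun x hx y hy a ha b hb ↦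
    hXadd _ (hXsmul a ha x hx) _ (hXsmul b hb y hy)
  let K : ProperCone ℝ Z := ⟨PointedCone.ofConeComb Zp ⟨0, hZ0⟩ fun x hx y hy a ha b hb ↦
    hZadd _ (hZsmul a ha x hx) _ (hZsmul b hb y hy), hZclosed⟩
  exact stmt_1_general C K J
end

section
/- Let J : X → Z be a bounded linear operator between pre-ordered Banach spaces. If the wedge Z_+ is generating in Z and J is bipositive, injective, and has majorizing range, then J'(Z'_+) = X'_+, i.e. the dual operator maps the dual wedge of Z' onto the dual wedge of X'. -/
/-!
A functional `x'` that is nonnegative on `X_+ = J⁻¹(Z_+)` vanishes on `ker J ⊆ X_+ ∩ -X_+`, so it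
factors through the range of `J`. That range is majorizing, so M. Riesz's extension theorem provides
a linear functional on `Z` that is nonnegative on `Z_+`. Such a functional is continuous:

* it is bounded on the part of `Z_+` in the unit ball, since otherwise some absolutely convergent
  series in `Z_+` would have all its terms mapped to `1`, while positivity bounds the partial sums
  of the image series by the value at the sum;
* by the open mapping theorem, applied to the operator that sends an `ℓ¹` family of coefficients to
  the corresponding combination of vectors of `Z_+` in the unit ball, every `z` is a difference of
  two vectors of `Z_+` of norm at most `C‖z‖` (Andô's theorem).
-/

open scoped lp

section L1Combination

variable {ι 𝕜 Z : Type*} [NormedField 𝕜] [NormedAddCommGroup Z] [NormedSpace 𝕜 Z] {u : ι → Z}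

lemma hasSum_norm_l1 {E : Type*} [NormedAddCommGroup E] (c : ℓ¹(ι, E)) :
    HasSum (fun i ↦ ‖c i‖) ‖c‖ := by
  simpa using lp.hasSum_norm (by simp) c

lemma norm_smul_le_of_norm_le (hu : ∀ i, ‖u i‖ ≤ 1) {c d : ι → 𝕜} (hdc : ∀ i, ‖d i‖ ≤ ‖c i‖)
    (i : ι) : ‖d i • u i‖ ≤ ‖c i‖ := by
  rw [norm_smul]
  exact (mul_le_of_le_one_right (norm_nonneg _) (hu i)).trans (hdc i)

lemma norm_tsum_smul_le (hu : ∀ i, ‖u i‖ ≤ 1) (c : ℓ¹(ι, 𝕜)) {d : ι → 𝕜}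
    (hdc : ∀ i, ‖d i‖ ≤ ‖c i‖) : ‖∑' i, d i • u i‖ ≤ ‖c‖ :=
  tsum_of_norm_bounded (hasSum_norm_l1 c) (norm_smul_le_of_norm_le hu hdc)

variable [CompleteSpace Z]

lemma summable_smul_of_norm_le (hu : ∀ i, ‖u i‖ ≤ 1) (c : ℓ¹(ι, 𝕜)) {d : ι → 𝕜}
    (hdc : ∀ i, ‖d i‖ ≤ ‖c i‖) : Summable fun i ↦ d i • u i :=
  .of_norm_bounded (hasSum_norm_l1 c).summable (norm_smul_le_of_norm_le hu hdc)

variable (𝕜) in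
/-- The synthesis operator `c ↦ ∑ i, c i • u i` on `ℓ¹` of a family in the unit ball. -/
noncomputable def l1Combination (u : ι → Z) (hu : ∀ i, ‖u i‖ ≤ 1) : ℓ¹(ι, 𝕜) →L[𝕜] Z :=
  LinearMap.mkContinuous
    { toFun c := ∑' i, c i • u i
      map_add' c d := by
        have hc := summable_smul_of_norm_le hu c fun _ ↦ le_rfl
        have hd := summable_smul_of_norm_le hu d fun _ ↦ le_rfl
        simpa only [lp.coeFn_add, Pi.add_apply, add_smul] using hc.tsum_add hd
      map_smul' t c := by
        have hc := summable_smul_of_norm_le hu c fun _ ↦ le_rfl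
        simpa only [lp.coeFn_smul, Pi.smul_apply, smul_assoc, RingHom.id_apply] using
          hc.tsum_const_smul t }
    1 fun c ↦ (norm_tsum_smul_le hu c fun _ ↦ le_rfl).trans_eq (one_mul _).symm

lemma l1Combination_apply (hu : ∀ i, ‖u i‖ ≤ 1) (c : ℓ¹(ι, 𝕜)) :
    l1Combination 𝕜 u hu c = ∑' i, c i • u i := rfl

lemma l1Combination_single [DecidableEq ι] (hu : ∀ i, ‖u i‖ ≤ 1) (i : ι) (t : 𝕜) :
    l1Combination 𝕜 u hu (lp.single 1 i t) = t • u i := by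
  rw [l1Combination_apply, tsum_eq_single i fun j hj ↦ by simp [hj]]
  simp

end L1Combination

section ReproducingCone

variable {Z : Type*} [NormedAddCommGroup Z] [NormedSpace ℝ Z] [CompleteSpace Z]

lemma exists_l1Combination_eq_sub {ι : Type*} {u : ι → Z} (K : ProperCone ℝ Z)
    (hu : ∀ i, ‖u i‖ ≤ 1) (huK : ∀ i, u i ∈ K) (c : ℓ¹(ι, ℝ)) :
    ∃ a ∈ K, ∃ b ∈ K, l1Combination ℝ u hu c = a - b ∧ ‖a‖ ≤ ‖c‖ ∧ ‖b‖ ≤ ‖c‖ := by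
  have hpos : ∀ i, ‖(c i)⁺‖ ≤ ‖c i‖ := fun i ↦ by
    rw [Real.norm_of_nonneg (posPart_nonneg _)]
    exact sup_le (le_abs_self _) (abs_nonneg _)
  have hneg : ∀ i, ‖(c i)⁻‖ ≤ ‖c i‖ := fun i ↦ by
    rw [Real.norm_of_nonneg (negPart_nonneg _)]
    exact sup_le (neg_le_abs _) (abs_nonneg _)
  refine ⟨∑' i, (c i)⁺ • u i, tsum_mem K.isClosed fun i ↦ K.smul_mem (huK i) (posPart_nonneg _),
    ∑' i, (c i)⁻ • u i, tsum_mem K.isClosed fun i ↦ K.smul_mem (huK i) (negPart_nonneg _),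
    ?_, norm_tsum_smul_le hu c hpos, norm_tsum_smul_le hu c hneg⟩
  rw [← (summable_smul_of_norm_le hu c hpos).tsum_sub (summable_smul_of_norm_le hu c hneg)]
  simp only [← sub_smul, posPart_sub_negPart, l1Combination_apply]

lemma l1Combination_unitBall_surjective (K : PointedCone ℝ Z)
    (hK : (K : ConvexCone ℝ Z).IsReproducing) :
    Function.Surjective
      (l1Combination ℝ (Subtype.val : {k // k ∈ K ∧ ‖k‖ ≤ 1} → Z) fun k ↦ k.2.2) := by
  classical
  set T := l1Combination ℝ (Subtype.val : {k // k ∈ K ∧ ‖k‖ ≤ 1} → Z) fun k ↦ k.2.2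
  have mem_range : ∀ k ∈ K, k ∈ T.range := by
    intro k hk
    let e : {k // k ∈ K ∧ ‖k‖ ≤ 1} :=
      ⟨‖k‖⁻¹ • k, K.smul_mem (r := ‖k‖⁻¹) (by positivity) hk, by
        simpa only [norm_smul, norm_inv, norm_norm] using inv_mul_le_one⟩
    refine ⟨lp.single 1 e ‖k‖, ?_⟩
    rw [ContinuousLinearMap.coe_coe, l1Combination_single]
    obtain rfl | hk0 := eq_or_ne k 0
    · simp
    · exact smul_inv_smul₀ (norm_ne_zero_iff.mpr hk0) k
  intro z
  obtain ⟨a, ha, b, hb, rfl⟩ := Set.mem_sub.mp (hK.sub_eq_univ.ge (Set.mem_univ z))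
  exact T.range.sub_mem (mem_range a ha) (mem_range b hb)

theorem exists_eq_sub_norm_le_of_isReproducing (K : ProperCone ℝ Z)
    (hK : (K : ConvexCone ℝ Z).IsReproducing) :
    ∃ C > 0, ∀ z, ∃ a ∈ K, ∃ b ∈ K, z = a - b ∧ ‖a‖ ≤ C * ‖z‖ ∧ ‖b‖ ≤ C * ‖z‖ := by
  obtain ⟨C, hC, hpreimage⟩ := (l1Combination ℝ _ _).exists_preimage_norm_le
    (l1Combination_unitBall_surjective K.toPointedCone hK)
  refine ⟨C, hC, fun z ↦ ?_⟩
  obtain ⟨c, rfl, hc⟩ := hpreimage z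
  obtain ⟨a, ha, b, hb, hab, hac, hbc⟩ :=
    exists_l1Combination_eq_sub K (fun k ↦ k.2.2) (fun k ↦ k.2.1) c
  exact ⟨a, ha, b, hb, hab, hac.trans hc, hbc.trans hc⟩

end ReproducingCone

section NonnegOnCone

lemma summable_map_of_nonneg_on_closed_submonoid {ι Z S F : Type*} [AddCommGroup Z]
    [TopologicalSpace Z] [IsTopologicalAddGroup Z] [T2Space Z] [SetLike S Z]
    [AddSubmonoidClass S Z] {K : S} (hK : IsClosed (K : Set Z)) [FunLike F Z ℝ]
    [AddMonoidHomClass F Z ℝ] (g : F) (hg : ∀ z ∈ K, 0 ≤ g z) {w : ι → Z}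
    (hwK : ∀ i, w i ∈ K) (hw : Summable w) :
    Summable fun i ↦ g (w i) := by
  refine summable_of_sum_le (c := g (∑' i, w i)) (fun i ↦ hg _ (hwK i)) fun s ↦ ?_
  have htail : 0 ≤ g (∑' i : ↑(s : Set ι)ᶜ, w i) := hg _ (tsum_mem hK fun i ↦ hwK i)
  rw [← hw.sum_add_tsum_compl (s := s), map_add, map_sum]
  exact le_add_of_nonneg_right htail

variable {Z : Type*} [NormedAddCommGroup Z] [NormedSpace ℝ Z] [CompleteSpace Z]

theorem exists_le_mul_norm_of_nonneg_on_cone (K : ProperCone ℝ Z) (g : Z →ₗ[ℝ] ℝ)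
    (hg : ∀ z ∈ K, 0 ≤ g z) : ∃ M ≥ 0, ∀ z ∈ K, g z ≤ M * ‖z‖ := by
  by_contra! hunbdd
  choose z hzK hz using fun n : ℕ ↦ hunbdd (2 ^ n) (by positivity)
  have hgz : ∀ n, 0 < g (z n) := fun n ↦ (by positivity : 0 ≤ 2 ^ n * ‖z n‖).trans_lt (hz n)
  have hnorm : ∀ n, ‖(g (z n))⁻¹ • z n‖ ≤ (1 / 2) ^ n := by
    intro n
    rw [norm_smul, norm_inv, Real.norm_of_nonneg (hgz n).le, inv_mul_le_iff₀ (hgz n), one_div,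
      inv_pow, ← div_eq_mul_inv, le_div_iff₀' (by positivity)]
    exact (hz n).le
  have hsummable : Summable fun n ↦ (g (z n))⁻¹ • z n :=
    .of_norm_bounded summable_geometric_two hnorm
  have hone : Summable fun _ : ℕ ↦ (1 : ℝ) := by
    simpa only [map_smul, smul_eq_mul, inv_mul_cancel₀ (hgz _).ne'] using
      summable_map_of_nonneg_on_closed_submonoid K.isClosed g hg
        (fun n ↦ K.smul_mem (hzK n) (inv_nonneg.mpr (hgz n).le)) hsummable
  exact one_ne_zero ((summable_const_iff _).mp hone)

theorem continuous_of_nonneg_on_reproducing_cone (K : ProperCone ℝ Z)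
    (hK : (K : ConvexCone ℝ Z).IsReproducing) (g : Z →ₗ[ℝ] ℝ) (hg : ∀ z ∈ K, 0 ≤ g z) :
    Continuous g := by
  obtain ⟨M, hM, hgM⟩ := exists_le_mul_norm_of_nonneg_on_cone K g hg
  obtain ⟨C, -, hdecomp⟩ := exists_eq_sub_norm_le_of_isReproducing K hK
  refine AddMonoidHomClass.continuous_of_bound g (M * C) fun z ↦ ?_
  obtain ⟨a, ha, b, hb, hz, haC, hbC⟩ := hdecomp z
  have hga : g a ≤ M * C * ‖z‖ := (hgM a ha).trans (by rw [mul_assoc]; gcongr)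
  have hgb : g b ≤ M * C * ‖z‖ := (hgM b hb).trans (by rw [mul_assoc]; gcongr)
  calc ‖g z‖ = |g a - g b| := by rw [hz, map_sub, Real.norm_eq_abs]
    _ ≤ M * C * ‖z‖ := abs_sub_le_of_nonneg_of_le (hg a ha) hga (hg b hb) hgb

end NonnegOnCone

theorem exists_nonneg_on_cone_comp_eq {V E : Type*} [AddCommGroup V] [Module ℝ V]
    [AddCommGroup E] [Module ℝ E] (S : PointedCone ℝ E) (J : V →ₗ[ℝ] E) (f : V →ₗ[ℝ] ℝ)
    (hf : ∀ v, J v ∈ S → 0 ≤ f v) (hmaj : ∀ y, ∃ v, J v - y ∈ S) :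
    ∃ g : E →ₗ[ℝ] ℝ, g ∘ₗ J = f ∧ ∀ y ∈ S, 0 ≤ g y := by
  have hker : ∀ v ∈ J.ker, f v = 0 := fun v hv ↦ by
    have hv0 : J v = 0 := hv
    have hnonneg : 0 ≤ f v := hf v (by simp [hv0])
    have hnonneg_neg : 0 ≤ f (-v) := hf (-v) (by simp [hv0])
    rw [map_neg] at hnonneg_neg
    linarith
  obtain ⟨φ, rfl⟩ : f ∈ J.dualMap.range := by
    rwa [LinearMap.range_dualMap_eq_dualAnnihilator_ker, Submodule.mem_dualAnnihilator]
  obtain ⟨g, hgφ, hg⟩ := riesz_extension S (φ.toPMap J.range)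
    (by rintro ⟨_, v, rfl⟩ hv; exact hf v hv)
    (fun y ↦ by
      obtain ⟨v, hv⟩ := hmaj (-y)
      exact ⟨⟨J v, v, rfl⟩, by rwa [sub_neg_eq_add] at hv⟩)
  exact ⟨g, LinearMap.ext fun v ↦ hgφ ⟨J v, v, rfl⟩, hg⟩

theorem stmt_2_general {X Z : Type*} [AddCommGroup X] [Module ℝ X] [TopologicalSpace X]
    [NormedAddCommGroup Z] [NormedSpace ℝ Z] [CompleteSpace Z] (Xp : Set X) (K : ProperCone ℝ Z)
    (J : X →L[ℝ] Z) (hgen : ∀ z, ∃ a ∈ K, ∃ b ∈ K, z = a - b) (hbipos : ∀ x, J x ∈ K ↔ x ∈ Xp)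
    (hmaj : ∀ z, ∃ x, J x - z ∈ K) :
    (fun z' : Z →L[ℝ] ℝ => z'.comp J) '' {z' | ∀ z ∈ K, 0 ≤ z' z} =
      {x' : X →L[ℝ] ℝ | ∀ x ∈ Xp, 0 ≤ x' x} := by
  have hK : (K : ConvexCone ℝ Z).IsReproducing := .of_univ_subset fun z _ ↦
    have ⟨a, ha, b, hb, hz⟩ := hgen z
    Set.mem_sub.mpr ⟨a, ha, b, hb, hz.symm⟩
  apply Set.Subset.antisymm
  · rintro _ ⟨z', hz', rfl⟩ x hx
    exact hz' _ ((hbipos x).mpr hx)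
  · intro x' hx'
    obtain ⟨g, hgJ, hg⟩ := exists_nonneg_on_cone_comp_eq K.toPointedCone (J : X →ₗ[ℝ] Z) x'
      (fun x hx ↦ hx' x ((hbipos x).mp hx)) hmaj
    exact ⟨⟨g, continuous_of_nonneg_on_reproducing_cone K hK g hg⟩, hg,
      ContinuousLinearMap.coe_injective hgJ⟩

/-- Let `J : X → Z` be a bounded linear operator between pre-ordered Banach spaces.  If the
wedge `Zp` is generating in `Z` and `J` is bipositive, injective, and has majorizing
range, then `J'` maps the dual wedge of `Z'` onto the dual wedge of `X'`. -/
theorem stmt_2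
    {X Z : Type*}
    [NormedAddCommGroup X] [NormedSpace ℝ X] [CompleteSpace X]
    [NormedAddCommGroup Z] [NormedSpace ℝ Z] [CompleteSpace Z]
    (Xp : Set X) (hXclosed : IsClosed Xp) (hX0 : (0 : X) ∈ Xp)
    (hXadd : ∀ x ∈ Xp, ∀ y ∈ Xp, x + y ∈ Xp)
    (hXsmul : ∀ a : ℝ, 0 ≤ a → ∀ x ∈ Xp, a • x ∈ Xp)
    (Zp : Set Z) (hZclosed : IsClosed Zp) (hZ0 : (0 : Z) ∈ Zp)
    (hZadd : ∀ x ∈ Zp, ∀ y ∈ Zp, x + y ∈ Zp)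
    (hZsmul : ∀ a : ℝ, 0 ≤ a → ∀ x ∈ Zp, a • x ∈ Zp)
    (J : X →L[ℝ] Z)
    (hgen : ∀ z : Z, ∃ a ∈ Zp, ∃ b ∈ Zp, z = a - b)
    (hbipos : ∀ x : X, J x ∈ Zp ↔ x ∈ Xp)
    (hinj : Function.Injective J)
    (hmaj : ∀ z : Z, ∃ x : X, J x - z ∈ Zp) :
    (fun z' : Z →L[ℝ] ℝ => z'.comp J) '' {z' : Z →L[ℝ] ℝ | ∀ z ∈ Zp, 0 ≤ z' z}
      = {x' : X →L[ℝ] ℝ | ∀ x ∈ Xp, 0 ≤ x' x} := by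
  let K : ProperCone ℝ Z :=
    { carrier := Zp, zero_mem' := hZ0, add_mem' := fun ha hb ↦ hZadd _ ha _ hb,
      smul_mem' := fun c z hz ↦ hZsmul c c.2 z hz, isClosed' := hZclosed }
  exact stmt_2_general Xp K J hgen hbipos hmaj
end

section
/- Let X be a pre-ordered Banach space whose wedge X_+ is generating, let V ⊆ X be a vector subspace, let x' ∈ X'_+ be a positive continuous functional, and let φ : V → ℝ be linear. Then the following are equivalent: (i) there exists y' ∈ X' with 0 ≤ y' ≤ x' (i.e. y' ∈ X'_+ and x' − y' ∈ X'_+) such that y' restricted to V equals φ; (ii) for all v ∈ V and all w ∈ X_+, the inequality v ≤ w implies φ(v) ≤ ⟨x', w⟩. -/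
/-!
A functional `g` with `0 ≤ g ≤ x'` on the wedge `C` amounts to a functional `G` on `X × X` that is
positive on `C × C`, namely `G (x, y) = g x + (x' - g) y`. If `g` extends `φ`, then `G` is
determined on the pairs with difference in `V`: there `G (x, y) = φ (x - y) + x' y`. Condition (ii)
says exactly that this functional is positive, so the M. Riesz extension theorem provides `G`.

Continuity of `g` is automatic: when `C` is closed and generating, the open mapping theorem for
`ℓ¹(C) → X`, `c ↦ ∑' u, c u • u / ‖u‖`, writes every `x` as a difference of elements of `C` whose
norms are bounded by a multiple of `‖x‖`.
-/

open scoped ENNReal lp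

section Reproducing

variable {R M : Type*} [Semiring R] [PartialOrder R] [AddCommGroup M] [Module R M]
  {C : ConvexCone R M}

theorem exists_mem_sub_eq_of_isReproducing (hgen : C.IsReproducing) (x : M) :
    ∃ a ∈ C, ∃ b ∈ C, a - b = x :=
  Set.mem_sub.1 (hgen.sub_eq_univ ▸ Set.mem_univ x)

theorem exists_add_mem_add_mem_of_isReproducing (hgen : C.IsReproducing) (x y : M) :
    ∃ z, z + x ∈ C ∧ z + y ∈ C := by
  obtain ⟨a, ha, b, hb, rfl⟩ := exists_mem_sub_eq_of_isReproducing hgen x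
  obtain ⟨c, hc, d, hd, rfl⟩ := exists_mem_sub_eq_of_isReproducing hgen y
  have hx : b + d + (a - b) = a + d := by abel
  have hy : b + d + (c - d) = b + c := by abel
  exact ⟨b + d, hx ▸ C.add_mem ha hd, hy ▸ C.add_mem hb hc⟩

end Reproducing

section BoundedDecomposition

theorem exists_lp_nonneg_sub_eq_norm_le {ι : Type*} {E : ι → Type*}
    [∀ i, NormedAddCommGroup (E i)] [∀ i, Lattice (E i)] [∀ i, HasSolidNorm (E i)]
    [∀ i, IsOrderedAddMonoid (E i)] {p : ℝ≥0∞} (hp : p ≠ 0) (c : lp E p) :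
    ∃ a b : lp E p,
      (∀ i, 0 ≤ a i) ∧ (∀ i, 0 ≤ b i) ∧ a - b = c ∧ ‖a‖ ≤ ‖c‖ ∧ ‖b‖ ≤ ‖c‖ := by
  have norm_posPart_le (i : ι) : ‖(c i)⁺‖ ≤ ‖c i‖ :=
    norm_le_norm_of_abs_le_abs <| by
      rw [abs_of_nonneg (posPart_nonneg _), ← posPart_add_negPart]
      exact le_add_of_nonneg_right (negPart_nonneg _)
  have norm_negPart_le (i : ι) : ‖(c i)⁻‖ ≤ ‖c i‖ :=
    norm_le_norm_of_abs_le_abs <| by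
      rw [abs_of_nonneg (negPart_nonneg _), ← posPart_add_negPart]
      exact le_add_of_nonneg_left (posPart_nonneg _)
  refine ⟨⟨fun i ↦ (c i)⁺, (lp.memℓp c).mono' norm_posPart_le⟩,
    ⟨fun i ↦ (c i)⁻, (lp.memℓp c).mono' norm_negPart_le⟩,
    fun i ↦ posPart_nonneg _, fun i ↦ negPart_nonneg _, ?_,
    lp.norm_mono hp norm_posPart_le, lp.norm_mono hp norm_negPart_le⟩
  ext i
  exact posPart_sub_negPart (c i)

variable {X : Type*} [NormedAddCommGroup X] [NormedSpace ℝ X]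

/-- The normalized elements of a cone, as a bounded family indexed by the cone itself, with
`0` normalized to `0`. Every `u ∈ C` is `‖u‖` times its own member of the family. -/
noncomputable def normalizedFamily (C : PointedCone ℝ X) : ℓ^∞(C, X) :=
  ⟨fun u ↦ NormedSpace.normalize (u : X), memℓp_infty ⟨1, by
    rintro _ ⟨u, rfl⟩
    simpa [NormedSpace.normalize, norm_smul] using inv_mul_le_one (a := ‖(u : X)‖)⟩⟩

theorem normalizedFamily_mem (C : PointedCone ℝ X) (u : C) : normalizedFamily C u ∈ C :=
  C.smul_mem (inv_nonneg.2 (norm_nonneg (u : X))) u.2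

variable [CompleteSpace X]

/-- The synthesis operator `c ↦ ∑' i, c i • v i` of a bounded family `v`, as a continuous linear
map on `ℓ¹`. -/
noncomputable def l1Synthesis {ι : Type*} (v : ℓ^∞(ι, X)) : ℓ¹(ι, ℝ) →L[ℝ] X :=
  (lp.dualPairing 1 ∞ (fun _ : ι ↦ ContinuousLinearMap.lsmul ℝ ℝ (E := X)) (K := 1)
    fun _ ↦ ContinuousLinearMap.opNorm_lsmul_le).flip v

theorem l1Synthesis_apply {ι : Type*} (v : ℓ^∞(ι, X)) (c : ℓ¹(ι, ℝ)) :
    l1Synthesis v c = ∑' i, c i • v i :=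
  rfl

theorem l1Synthesis_single {ι : Type*} [DecidableEq ι] (v : ℓ^∞(ι, X)) (i : ι) (t : ℝ) :
    l1Synthesis v (lp.single 1 i t) = t • v i := by
  rw [l1Synthesis_apply, tsum_eq_single i, lp.single_apply_self]
  intro j hj
  rw [lp.single_apply_ne _ _ _ hj, zero_smul]

theorem l1Synthesis_mem_of_nonneg {ι : Type*} {C : PointedCone ℝ X} (hC : IsClosed (C : Set X))
    {v : ℓ^∞(ι, X)} (hv : ∀ i, v i ∈ C) {c : ℓ¹(ι, ℝ)} (hc : ∀ i, 0 ≤ c i) :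
    l1Synthesis v c ∈ C :=
  tsum_mem hC fun i ↦ C.smul_mem (hc i) (hv i)

theorem l1Synthesis_normalizedFamily_surjective {C : PointedCone ℝ X}
    (hgen : C.toConvexCone.IsReproducing) :
    Function.Surjective (l1Synthesis (normalizedFamily C)) := by
  classical
  have apply_single (u : C) :
      l1Synthesis (normalizedFamily C) (lp.single 1 u ‖(u : X)‖) = u := by
    rw [l1Synthesis_single]
    exact NormedSpace.norm_smul_normalize (u : X)
  intro x
  obtain ⟨a, ha, b, hb, rfl⟩ := exists_mem_sub_eq_of_isReproducing hgen x
  exact ⟨lp.single 1 ⟨a, ha⟩ ‖a‖ - lp.single 1 ⟨b, hb⟩ ‖b‖, by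
    rw [map_sub, apply_single ⟨a, ha⟩, apply_single ⟨b, hb⟩]⟩

theorem exists_mem_sub_eq_norm_le_of_isReproducing {C : PointedCone ℝ X}
    (hC : IsClosed (C : Set X)) (hgen : C.toConvexCone.IsReproducing) :
    ∃ M : ℝ, ∀ x, ∃ a ∈ C, ∃ b ∈ C, a - b = x ∧ ‖a‖ ≤ M * ‖x‖ ∧ ‖b‖ ≤ M * ‖x‖ := by
  set T := l1Synthesis (normalizedFamily C)
  obtain ⟨M, -, hM⟩ :=
    T.exists_preimage_norm_le (l1Synthesis_normalizedFamily_surjective hgen)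
  have mem_of_nonneg {d : ℓ¹(C, ℝ)} (hd : ∀ u, 0 ≤ d u) : T d ∈ C :=
    l1Synthesis_mem_of_nonneg hC (normalizedFamily_mem C) hd
  refine ⟨‖T‖ * M, fun x ↦ ?_⟩
  obtain ⟨c, rfl, hc⟩ := hM x
  obtain ⟨p, q, hp, hq, hpq, hpc, hqc⟩ := exists_lp_nonneg_sub_eq_norm_le one_ne_zero c
  have norm_le {d : ℓ¹(C, ℝ)} (hd : ‖d‖ ≤ ‖c‖) : ‖T d‖ ≤ ‖T‖ * M * ‖T c‖ := by
    rw [mul_assoc]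
    exact T.le_opNorm_of_le (hd.trans hc)
  exact ⟨T p, mem_of_nonneg hp, T q, mem_of_nonneg hq, by rw [← map_sub, hpq],
    norm_le hpc, norm_le hqc⟩

theorem continuous_of_norm_le_on_isReproducing {F : Type*} [SeminormedAddCommGroup F]
    [NormedSpace ℝ F] {C : PointedCone ℝ X} (hC : IsClosed (C : Set X))
    (hgen : C.toConvexCone.IsReproducing) (g : X →ₗ[ℝ] F) {K : ℝ}
    (hg : ∀ x ∈ C, ‖g x‖ ≤ K * ‖x‖) : Continuous g := by
  obtain ⟨M, hM⟩ := exists_mem_sub_eq_norm_le_of_isReproducing hC hgen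
  refine AddMonoidHomClass.continuous_of_bound g (2 * |K| * M) fun x ↦ ?_
  obtain ⟨a, ha, b, hb, rfl, hax, hbx⟩ := hM x
  calc ‖g (a - b)‖ ≤ ‖g a‖ + ‖g b‖ := by rw [map_sub]; exact norm_sub_le _ _
    _ ≤ |K| * ‖a‖ + |K| * ‖b‖ := by
        gcongr
        · exact (hg a ha).trans (by gcongr; exact le_abs_self K)
        · exact (hg b hb).trans (by gcongr; exact le_abs_self K)
    _ ≤ |K| * (M * ‖a - b‖) + |K| * (M * ‖a - b‖) := by gcongr
    _ = 2 * |K| * M * ‖a - b‖ := by ring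

end BoundedDecomposition

section PositiveExtension

variable {E : Type*} [AddCommGroup E] [Module ℝ E]

/-- The partially defined functional `(x, y) ↦ φ (x - y) + f y` on the pairs whose difference lies
in `V`: the restriction to those pairs of `(x, y) ↦ g x + (f - g) y` for any `g` extending `φ`. -/
def diffFunctional (V : Submodule ℝ E) (φ : V →ₗ[ℝ] ℝ) (f : E →ₗ[ℝ] ℝ) : E × E →ₗ.[ℝ] ℝ where
  domain := V.comap (LinearMap.fst ℝ E E - LinearMap.snd ℝ E E)
  toFun := φ ∘ₗ (LinearMap.fst ℝ E E - LinearMap.snd ℝ E E).submoduleComap V +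
    f ∘ₗ LinearMap.snd ℝ E E ∘ₗ Submodule.subtype _

theorem diffFunctional_apply {V : Submodule ℝ E} {φ : V →ₗ[ℝ] ℝ} {f : E →ₗ[ℝ] ℝ}
    (z : (diffFunctional V φ f).domain) :
    diffFunctional V φ f z = φ ⟨z.1.1 - z.1.2, z.2⟩ + f z.1.2 :=
  rfl

theorem exists_linearMap_extension_nonneg_le {C : PointedCone ℝ E}
    (hgen : C.toConvexCone.IsReproducing) (V : Submodule ℝ E) (φ : V →ₗ[ℝ] ℝ) (f : E →ₗ[ℝ] ℝ)
    (hφ : ∀ (v : V), ∀ w ∈ C, w - (v : E) ∈ C → φ v ≤ f w) :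
    ∃ g : E →ₗ[ℝ] ℝ, (∀ x ∈ C, 0 ≤ g x) ∧ (∀ x ∈ C, g x ≤ f x) ∧ ∀ v : V, g v = φ v := by
  have diffFunctional_nonneg (z : (diffFunctional V φ f).domain)
      (hz : (z : E × E) ∈ Submodule.prod C C) : 0 ≤ diffFunctional V φ f z := by
    obtain ⟨⟨x, y⟩, hxy⟩ := z
    have hneg : φ (-⟨x - y, hxy⟩) ≤ f y := hφ _ y hz.2 (by simpa using hz.1)
    rw [map_neg] at hneg
    exact neg_le_iff_add_nonneg'.1 hneg
  have domain_cofinal (z : E × E) :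
      ∃ d : (diffFunctional V φ f).domain, (d : E × E) + z ∈ Submodule.prod C C := by
    obtain ⟨u, hu₁, hu₂⟩ := exists_add_mem_add_mem_of_isReproducing hgen z.1 z.2
    exact ⟨⟨(u, u), by simp [diffFunctional]⟩, hu₁, hu₂⟩
  obtain ⟨G, hG, hGpos⟩ := riesz_extension _ _ diffFunctional_nonneg domain_cofinal
  have G_add (v : V) (y : E) : G (v + y, y) = φ v + f y := by
    simpa [diffFunctional_apply] using hG ⟨(v + y, y), by simp [diffFunctional]⟩
  refine ⟨G ∘ₗ LinearMap.inl ℝ E E, fun x hx ↦ hGpos _ ⟨hx, C.zero_mem⟩, fun x hx ↦ ?_,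
    fun v ↦ ?_⟩
  · calc G (x, 0) ≤ G (x, 0) + G (0, x) := le_add_of_nonneg_right (hGpos _ ⟨C.zero_mem, hx⟩)
      _ = G (x, x) := by rw [← map_add, Prod.mk_add_mk, add_zero, zero_add]
      _ = f x := by simpa using G_add 0 x
  · simpa using G_add v 0

end PositiveExtension

/-- Let `X` be a pre-ordered Banach space whose wedge `Xp` is generating, let `V ⊆ X` be a
vector subspace, let `x'` be a positive continuous functional, and let `φ : V → ℝ` be
linear.  Then there exists `y' ∈ X'` with `0 ≤ y' ≤ x'` (with respect to the dual
wedge) extending `φ` if and only if for all `v ∈ V` and `w ∈ Xp` with `v ≤ w` one has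
`φ(v) ≤ ⟨x', w⟩`. -/
theorem stmt_6
    {X : Type*}
    [NormedAddCommGroup X] [NormedSpace ℝ X] [CompleteSpace X]
    (Xp : Set X) (hXclosed : IsClosed Xp) (hX0 : (0 : X) ∈ Xp)
    (hXadd : ∀ x ∈ Xp, ∀ y ∈ Xp, x + y ∈ Xp)
    (hXsmul : ∀ a : ℝ, 0 ≤ a → ∀ x ∈ Xp, a • x ∈ Xp)
    (hXgen : ∀ x : X, ∃ a ∈ Xp, ∃ b ∈ Xp, x = a - b)
    (V : Submodule ℝ X)
    (x' : X →L[ℝ] ℝ) (hx' : ∀ x ∈ Xp, 0 ≤ x' x)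
    (φ : V →ₗ[ℝ] ℝ) :
    (∃ y' : X →L[ℝ] ℝ,
        (∀ x ∈ Xp, 0 ≤ y' x) ∧ (∀ x ∈ Xp, y' x ≤ x' x) ∧ (∀ v : V, y' v = φ v))
      ↔ (∀ (v : V) (w : X), w ∈ Xp → w - (v : X) ∈ Xp → φ v ≤ x' w) := by
  let C : PointedCone ℝ X :=
    { carrier := Xp
      add_mem' := fun {x y} hx hy ↦ hXadd x hx y hy
      zero_mem' := hX0
      smul_mem' := fun a x hx ↦ hXsmul a a.2 x hx }
  have hgen : C.toConvexCone.IsReproducing := .of_univ_subset fun x _ ↦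
    let ⟨a, ha, b, hb, hab⟩ := hXgen x
    ⟨a, ha, b, hb, hab.symm⟩
  constructor
  · rintro ⟨y', hy'_nonneg, hy'_le, hy'_eq⟩ v w hw hvw
    calc φ v = y' v := (hy'_eq v).symm
      _ ≤ y' w := sub_nonneg.1 (map_sub y' w v ▸ hy'_nonneg _ hvw)
      _ ≤ x' w := hy'_le w hw
  · intro hφ
    obtain ⟨g, hg_nonneg, hg_le, hg_eq⟩ :=
      exists_linearMap_extension_nonneg_le hgen V φ (x' : X →ₗ[ℝ] ℝ) hφ
    have hg_cont : Continuous g :=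
      continuous_of_norm_le_on_isReproducing (C := C) hXclosed hgen g (K := ‖x'‖) fun x hx ↦ by
        rw [Real.norm_of_nonneg (hg_nonneg x hx)]
        exact (hg_le x hx).trans ((Real.le_norm_self _).trans (x'.le_opNorm x))
    exact ⟨⟨g, hg_cont⟩, hg_nonneg, hg_le, hg_eq⟩
end

section
/- Let X be an ordered Banach space, let Z be a pre-ordered Banach space, let J : X → Z be a positive bounded linear operator, and assume there is a sequence (R_n) of positive bounded linear operators Z → X such that (R_n J) converges to the identity of X in the weak operator topology. Then J is bipositive: for every x ∈ X, Jx ∈ Z_+ implies x ∈ X_+. -/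
open Filter Set Topology

theorem convex_of_add_mem_of_smul_mem {𝕜 E : Type*} [Semiring 𝕜] [PartialOrder 𝕜]
    [AddCommMonoid E] [SMul 𝕜 E] {s : Set E} (hadd : ∀ x ∈ s, ∀ y ∈ s, x + y ∈ s)
    (hsmul : ∀ a : 𝕜, 0 ≤ a → ∀ x ∈ s, a • x ∈ s) : Convex 𝕜 s :=
  fun x hx y hy a b ha hb _ => hadd _ (hsmul a ha x hx) _ (hsmul b hb y hy)

section LocallyConvex

variable {𝕜 E ι : Type*} [RCLike 𝕜] [AddCommGroup E] [Module 𝕜 E] [Module ℝ E]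
  [IsScalarTower ℝ 𝕜 E] [TopologicalSpace E] [IsTopologicalAddGroup E] [ContinuousSMul 𝕜 E]
  [LocallyConvexSpace ℝ E] {l : Filter ι}

theorem mem_of_frequently_mem_of_tendsto_dual {s : Set E} (hconv : Convex ℝ s)
    (hclosed : IsClosed s) {u : ι → E} {x : E} (hmem : ∃ᶠ i in l, u i ∈ s)
    (hlim : ∀ f : StrongDual 𝕜 E, Tendsto (fun i => f (u i)) l (𝓝 (f x))) : x ∈ s := by
  by_contra hx
  obtain ⟨f, c, hfx, hfs⟩ :=
    RCLike.geometric_hahn_banach_point_closed (𝕜 := 𝕜) hconv hclosed hx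
  have hlt : ∀ᶠ i in l, RCLike.re (f (u i)) < c :=
    ((RCLike.continuous_re.tendsto _).comp (hlim f)).eventually_lt_const hfx
  obtain ⟨i, hi, hic⟩ := (hmem.and_eventually hlt).exists
  exact (hfs _ hi).not_gt hic

theorem stmt_8_general {Z : Type*} {Xp : Set E} (hXconv : Convex ℝ Xp) (hXclosed : IsClosed Xp)
    {Zp : Set Z} {J : E → Z} {R : ι → Z → E} (hRpos : ∃ᶠ i in l, MapsTo (R i) Zp Xp)
    (hRJ : ∀ (x : E) (f : StrongDual 𝕜 E), Tendsto (fun i => f (R i (J x))) l (𝓝 (f x))) :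
    ∀ x : E, J x ∈ Zp → x ∈ Xp := fun x hx =>
  mem_of_frequently_mem_of_tendsto_dual hXconv hXclosed (hRpos.mono fun _ hmaps => hmaps hx)
    (hRJ x)

end LocallyConvex

/-- Let `X` be an ordered Banach space, `Z` a pre-ordered Banach space, `J : X → Z` a
positive bounded linear operator, and `(Rₙ)` a sequence of positive bounded linear
operators `Z → X` such that `(Rₙ J)` converges to the identity of `X` in the weak
operator topology.  Then `J` is bipositive: `J x ∈ Zp` implies `x ∈ Xp`. -/
theorem stmt_8
    {X Z : Type*}
    [NormedAddCommGroup X] [NormedSpace ℝ X] [CompleteSpace X]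
    [NormedAddCommGroup Z] [NormedSpace ℝ Z] [CompleteSpace Z]
    (Xp : Set X) (hXclosed : IsClosed Xp) (hX0 : (0 : X) ∈ Xp)
    (hXadd : ∀ x ∈ Xp, ∀ y ∈ Xp, x + y ∈ Xp)
    (hXsmul : ∀ a : ℝ, 0 ≤ a → ∀ x ∈ Xp, a • x ∈ Xp)
    (hXcone : ∀ x : X, x ∈ Xp → -x ∈ Xp → x = 0)
    (Zp : Set Z) (hZclosed : IsClosed Zp) (hZ0 : (0 : Z) ∈ Zp)
    (hZadd : ∀ x ∈ Zp, ∀ y ∈ Zp, x + y ∈ Zp)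
    (hZsmul : ∀ a : ℝ, 0 ≤ a → ∀ x ∈ Zp, a • x ∈ Zp)
    (J : X →L[ℝ] Z)
    (hJpos : ∀ x ∈ Xp, J x ∈ Zp)
    (R : ℕ → Z →L[ℝ] X)
    (hRpos : ∀ n : ℕ, ∀ z ∈ Zp, R n z ∈ Xp)
    (hRJ : ∀ (x : X) (x' : X →L[ℝ] ℝ),
      Filter.Tendsto (fun n => x' (R n (J x))) Filter.atTop (nhds (x' x))) :
    ∀ x : X, J x ∈ Zp → x ∈ Xp :=
  stmt_8_general (convex_of_add_mem_of_smul_mem hXadd hXsmul) hXclosed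
    (Frequently.of_forall hRpos) hRJ
end

section
/- Let D, E, and Ẽ be ordered Banach spaces such that the cone Ẽ_+ is generating and normal, and let J : D → E and J̃ : D → Ẽ be positive bounded linear operators such that J̃ is bipositive and its range is majorizing in Ẽ. Then there exists a number c ≥ 0, depending only on D, E, Ẽ, J, and J̃, such that for every ordered Banach space X and every positive bounded linear operator T : X → D, the dual operator (J∘T)' maps the span of E'_+ into X' with ‖(J∘T)' e'‖_{X'} ≤ c · ‖J̃∘T‖_{X → Ẽ} · ‖e'‖_{E'_+ − E'_+} for every e' ∈ E'_+ − E'_+. -/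
/-!
If `e'` is positive on `E`, then `φ = e' ∘ J` satisfies `φ x ≤ φ d ≤ ‖φ‖ ‖d‖` whenever `x ≤ d`,
and likewise for `-x`.  Since `J̃` is bipositive, `x ≤ d` may be tested in `Ẽ`, so it suffices to
choose `d` with `J̃ d ≥ J̃ x` and `‖d‖ ≤ K ‖J̃ x‖`, where `K` does not depend on `x`.

Such a `K` comes from the open mapping theorem for cones: a bounded operator sending a closed cone
of a Banach space onto a Banach space admits preimages in the cone of controlled norm.  It is
applied to `(d, k) ↦ J̃ d - k` on `D × Ẽ₊`, which is onto because the range of `J̃` is majorizing.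
-/

section OpenMapping

open Filter Metric Set Topology

variable {V F : Type*} [SeminormedAddCommGroup V] [NormedSpace ℝ V]
  [NormedAddCommGroup F] [NormedSpace ℝ F]

lemma exists_ball_subset_closure_image_cone [CompleteSpace F]
    (C : PointedCone ℝ V) (f : V →ₗ[ℝ] F) (hf : SurjOn f C univ) :
    ∃ r > 0, ∃ R ≥ 0, ball (0 : F) r ⊆ closure (f '' (C ∩ closedBall 0 R)) := by
  have hcover : ⋃ n : ℕ, closure (f '' (C ∩ closedBall 0 n)) = univ := by
    refine eq_univ_of_forall fun y => ?_
    obtain ⟨x, hxC, rfl⟩ := hf (mem_univ y)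
    obtain ⟨n, hn⟩ := exists_nat_ge ‖x‖
    exact mem_iUnion.2 ⟨n, subset_closure ⟨x, ⟨hxC, mem_closedBall_zero_iff.2 hn⟩, rfl⟩⟩
  obtain ⟨n, y₀, hy₀⟩ := nonempty_interior_of_iUnion_of_closed (fun _ => isClosed_closure) hcover
  obtain ⟨r, hr, hball⟩ := Metric.mem_nhds_iff.1 (mem_interior_iff_mem_nhds.1 hy₀)
  -- A cone is not symmetric, so the ball is moved to the origin by a preimage of `-y₀` in `C`.
  obtain ⟨x₀, hx₀C, hx₀⟩ := hf (mem_univ (-y₀))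
  refine ⟨r, hr, n + ‖x₀‖, by positivity, fun y hy => ?_⟩
  have hmem : y₀ + y ∈ closure (f '' (C ∩ closedBall 0 n)) := hball (by simpa using hy)
  have hmaps : MapsTo (· + f x₀) (f '' (C ∩ closedBall 0 n))
      (f '' (C ∩ closedBall 0 (n + ‖x₀‖))) := by
    rintro _ ⟨x, ⟨hxC, hx⟩, rfl⟩
    refine ⟨x + x₀, ⟨add_mem hxC hx₀C, mem_closedBall_zero_iff.2 ?_⟩, map_add f x x₀⟩
    exact norm_add_le_of_le (mem_closedBall_zero_iff.1 hx) le_rfl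
  simpa [hx₀] using map_mem_closure (continuous_add_const (f x₀)) hmem hmaps

lemma exists_approx_preimage_mem_cone_norm_le [CompleteSpace F]
    (C : PointedCone ℝ V) (f : V →ₗ[ℝ] F) (hf : SurjOn f C univ) :
    ∃ K ≥ 0, ∀ y, ∃ x ∈ C, ‖y - f x‖ ≤ ‖y‖ / 2 ∧ ‖x‖ ≤ K * ‖y‖ := by
  obtain ⟨r, hr, R, hR, hball⟩ := exists_ball_subset_closure_image_cone C f hf
  refine ⟨2 / r * R, by positivity, fun y => ?_⟩
  rcases eq_or_ne y 0 with rfl | hy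
  · exact ⟨0, zero_mem C, by simp, by simp⟩
  have : 0 < ‖y‖ := norm_pos_iff.2 hy
  obtain ⟨t, ht, hty⟩ : ∃ t > 0, t * ‖y‖ = r / 2 := ⟨r / 2 / ‖y‖, by positivity, by field_simp⟩
  have hty_mem : t • y ∈ ball (0 : F) r := by
    rw [mem_ball_zero_iff, norm_smul_of_nonneg ht.le, hty]
    exact half_lt_self hr
  obtain ⟨_, ⟨x, ⟨hxC, hx⟩, rfl⟩, hdist⟩ :=
    Metric.mem_closure_iff.1 (hball hty_mem) (r / 4) (by positivity)
  refine ⟨t⁻¹ • x, C.smul_mem (inv_nonneg.2 ht.le) hxC, ?_, ?_⟩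
  · rw [dist_eq_norm] at hdist
    calc ‖y - f (t⁻¹ • x)‖ = t⁻¹ * ‖t • y - f x‖ := by
          rw [← norm_smul_of_nonneg (by positivity), smul_sub, inv_smul_smul₀ ht.ne', map_smul]
      _ ≤ t⁻¹ * (t * ‖y‖ / 2) := by gcongr; linarith
      _ = ‖y‖ / 2 := by field_simp
  · calc ‖t⁻¹ • x‖ = t⁻¹ * ‖x‖ := norm_smul_of_nonneg (by positivity) x
      _ ≤ t⁻¹ * R := by gcongr; exact mem_closedBall_zero_iff.1 hx
      _ = t⁻¹ * (2 / r * (t * ‖y‖) * R) := by rw [hty]; field_simp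
      _ = 2 / r * R * ‖y‖ := by field_simp

lemma exists_preimage_mem_cone_norm_le_of_approx [CompleteSpace V]
    (C : ProperCone ℝ V) (f : V →L[ℝ] F) {K : ℝ} (hK : 0 ≤ K)
    (happrox : ∀ y, ∃ x ∈ C, ‖y - f x‖ ≤ ‖y‖ / 2 ∧ ‖x‖ ≤ K * ‖y‖) (y : F) :
    ∃ x ∈ C, f x = y ∧ ‖x‖ ≤ 2 * K * ‖y‖ := by
  choose g hgC hg_approx hg_norm using happrox
  let residual : ℕ → F := fun n => (fun w => w - f (g w))^[n] y
  have hresidual_succ (n : ℕ) : residual (n + 1) = residual n - f (g (residual n)) :=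
    Function.iterate_succ_apply' _ n y
  have hresidual_norm (n : ℕ) : ‖residual n‖ ≤ ‖y‖ * (1 / 2) ^ n := by
    induction n with
    | zero => simp [residual]
    | succ n ih =>
      rw [hresidual_succ, pow_succ]
      linarith [hg_approx (residual n)]
  have hresidual_lim : Tendsto residual atTop (𝓝 0) := by
    refine squeeze_zero_norm hresidual_norm ?_
    simpa using (tendsto_pow_atTop_nhds_zero_of_lt_one (r := (1 / 2 : ℝ)) (by norm_num)
      (by norm_num)).const_mul ‖y‖
  have hbound (n : ℕ) : ‖g (residual n)‖ ≤ K * ‖y‖ * (1 / 2) ^ n :=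
    (hg_norm (residual n)).trans (by rw [mul_assoc]; gcongr; exact hresidual_norm n)
  have hgeom : HasSum (fun n : ℕ => K * ‖y‖ * (1 / 2 : ℝ) ^ n) (2 * K * ‖y‖) := by
    rw [show 2 * K * ‖y‖ = K * ‖y‖ * 2 by ring]
    exact hasSum_geometric_two.mul_left (K * ‖y‖)
  have hsummable : Summable fun n => g (residual n) := .of_norm_bounded hgeom.summable hbound
  refine ⟨∑' n, g (residual n), tsum_mem C.isClosed fun n => hgC (residual n), ?_,
    tsum_of_norm_bounded hgeom hbound⟩
  have hpartial (n : ℕ) : ∑ i ∈ Finset.range n, f (g (residual i)) = y - residual n := by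
    have hterm (i : ℕ) : f (g (residual i)) = residual i - residual (i + 1) := by
      rw [hresidual_succ, sub_sub_cancel]
    simp only [hterm, Finset.sum_range_sub', residual, Function.iterate_zero_apply]
  have hlim := (hsummable.hasSum.mapL f).tendsto_sum_nat
  simp only [hpartial] at hlim
  exact tendsto_nhds_unique hlim (by simpa using hresidual_lim.const_sub y)

theorem exists_preimage_mem_cone_norm_le [CompleteSpace V] [CompleteSpace F]
    (C : ProperCone ℝ V) (f : V →L[ℝ] F) (hf : SurjOn f C univ) :
    ∃ K ≥ 0, ∀ y, ∃ x ∈ C, f x = y ∧ ‖x‖ ≤ K * ‖y‖ := by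
  obtain ⟨K, hK, happrox⟩ :=
    exists_approx_preimage_mem_cone_norm_le C.toPointedCone (f : V →ₗ[ℝ] F) hf
  exact ⟨2 * K, by positivity, exists_preimage_mem_cone_norm_le_of_approx C f hK happrox⟩

theorem exists_norm_le_of_majorizing [CompleteSpace V] [CompleteSpace F]
    (P : ProperCone ℝ F) (f : V →L[ℝ] F) (hf : ∀ z, ∃ v, f v - z ∈ P) :
    ∃ K ≥ 0, ∀ z, ∃ v, f v - z ∈ P ∧ ‖v‖ ≤ K * ‖z‖ := by
  let C : ProperCone ℝ (V × F) := P.comap (.snd ℝ V F)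
  let g : V × F →L[ℝ] F := f.comp (.fst ℝ V F) - .snd ℝ V F
  have hg : SurjOn g C univ := fun z _ =>
    let ⟨v, hv⟩ := hf z
    ⟨(v, f v - z), hv, sub_sub_cancel (f v) z⟩
  obtain ⟨K, hK, h⟩ := exists_preimage_mem_cone_norm_le C g hg
  refine ⟨K, hK, fun z => ?_⟩
  obtain ⟨⟨v, k⟩, hk, hvk, hnorm⟩ := h z
  have hvz : f v - z = k := sub_eq_iff_eq_add.2 (sub_eq_iff_eq_add'.1 hvk)
  exact ⟨v, hvz ▸ hk, (norm_fst_le (v, k)).trans hnorm⟩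

end OpenMapping

section PositiveFunctional

variable {D F X : Type*} [SeminormedAddCommGroup D] [NormedSpace ℝ D]
  [SeminormedAddCommGroup F] [NormedSpace ℝ F] [SeminormedAddCommGroup X] [NormedSpace ℝ X]
  {P : Set D} {S : D →L[ℝ] F} {K : ℝ} {φ : D →L[ℝ] ℝ}

lemma abs_apply_le_of_nonneg_on (hφ : ∀ x ∈ P, 0 ≤ φ x)
    (hdom : ∀ x, ∃ d, d - x ∈ P ∧ ‖d‖ ≤ K * ‖S x‖) (x : D) :
    |φ x| ≤ ‖φ‖ * (K * ‖S x‖) := by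
  have hle (w : D) : φ w ≤ ‖φ‖ * (K * ‖S w‖) := by
    obtain ⟨d, hdw, hd⟩ := hdom w
    calc φ w ≤ φ d := sub_nonneg.1 (map_sub φ d w ▸ hφ _ hdw)
      _ ≤ ‖φ d‖ := Real.le_norm_self _
      _ ≤ ‖φ‖ * (K * ‖S w‖) := φ.le_opNorm_of_le hd
  exact abs_le'.2 ⟨hle x, by simpa only [map_neg, norm_neg] using hle (-x)⟩

lemma norm_comp_le_of_nonneg_on (hK : 0 ≤ K) (hφ : ∀ x ∈ P, 0 ≤ φ x)
    (hdom : ∀ x, ∃ d, d - x ∈ P ∧ ‖d‖ ≤ K * ‖S x‖) (T : X →L[ℝ] D) :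
    ‖φ.comp T‖ ≤ K * ‖S.comp T‖ * ‖φ‖ := by
  refine ContinuousLinearMap.opNorm_le_bound _ (by positivity) fun x => ?_
  calc ‖φ (T x)‖ ≤ ‖φ‖ * (K * ‖S (T x)‖) := abs_apply_le_of_nonneg_on hφ hdom (T x)
    _ ≤ ‖φ‖ * (K * (‖S.comp T‖ * ‖x‖)) := by gcongr; exact (S.comp T).le_opNorm x
    _ = K * ‖S.comp T‖ * ‖φ‖ * ‖x‖ := by ring

end PositiveFunctional

theorem stmt_9_general {D E Et : Type*}
    [SeminormedAddCommGroup D] [NormedSpace ℝ D] [CompleteSpace D]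
    [SeminormedAddCommGroup E] [NormedSpace ℝ E]
    [NormedAddCommGroup Et] [NormedSpace ℝ Et] [CompleteSpace Et]
    (Ep : Set E) (Etp : ProperCone ℝ Et) (J : D →L[ℝ] E) (Jt : D →L[ℝ] Et)
    (hJ : ∀ x, Jt x ∈ Etp → J x ∈ Ep) (hJtmaj : ∀ z, ∃ x, Jt x - z ∈ Etp) :
    ∃ c : ℝ, 0 ≤ c ∧ ∀ (X : Type*) [SeminormedAddCommGroup X] [NormedSpace ℝ X] (T : X →L[ℝ] D)
      (y' z' : E →L[ℝ] ℝ), (∀ e ∈ Ep, 0 ≤ y' e) → (∀ e ∈ Ep, 0 ≤ z' e) →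
      ‖(y' - z').comp (J.comp T)‖ ≤ c * ‖Jt.comp T‖ * (‖y'‖ + ‖z'‖) := by
  obtain ⟨K, hK, hmaj⟩ := exists_norm_le_of_majorizing Etp Jt hJtmaj
  have hdom (x : D) : ∃ d, d - x ∈ Jt ⁻¹' Etp ∧ ‖d‖ ≤ K * ‖Jt x‖ := by
    simpa only [Set.mem_preimage, map_sub, SetLike.mem_coe] using hmaj (Jt x)
  refine ⟨K * ‖J‖, by positivity, fun X _ _ T y' z' hy' hz' => ?_⟩
  have hpos {w : E →L[ℝ] ℝ} (hw : ∀ e ∈ Ep, 0 ≤ w e) :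
      ‖w.comp (J.comp T)‖ ≤ K * ‖Jt.comp T‖ * (‖w‖ * ‖J‖) :=
    (norm_comp_le_of_nonneg_on (φ := w.comp J) hK (fun x hx => hw _ (hJ x hx)) hdom T).trans
      (by gcongr; exact w.opNorm_comp_le J)
  calc ‖(y' - z').comp (J.comp T)‖ ≤ ‖y'.comp (J.comp T)‖ + ‖z'.comp (J.comp T)‖ := by
        rw [ContinuousLinearMap.sub_comp]
        exact norm_sub_le _ _
    _ ≤ K * ‖Jt.comp T‖ * (‖y'‖ * ‖J‖) + K * ‖Jt.comp T‖ * (‖z'‖ * ‖J‖) :=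
        add_le_add (hpos hy') (hpos hz')
    _ = K * ‖J‖ * ‖Jt.comp T‖ * (‖y'‖ + ‖z'‖) := by ring

/-- Let `D`, `E`, `Ẽ` be ordered Banach spaces with `Ẽ₊` generating and normal, and let
`J : D → E`, `J̃ : D → Ẽ` be positive bounded linear operators with `J̃` bipositive and
its range majorizing in `Ẽ`.  Then there is `c ≥ 0` (depending only on the data so
far) such that for every ordered Banach space `X` and every positive bounded operator
`T : X → D`, and every `e'` in the span of the dual wedge of `E`, written as
`e' = y - z` with `y, z` in the dual wedge, one has
`‖(J∘T)' e'‖ ≤ c ⬝ ‖J̃∘T‖ ⬝ (‖y‖ + ‖z‖)`; as `‖e'‖_{E'₊ - E'₊}` is the infimum of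
`‖y‖ + ‖z‖` over all such decompositions, this says exactly
`‖(J∘T)' e'‖ ≤ c ⬝ ‖J̃∘T‖ ⬝ ‖e'‖_{E'₊ - E'₊}`. -/
theorem stmt_9
    {D E Et : Type*}
    [NormedAddCommGroup D] [NormedSpace ℝ D] [CompleteSpace D]
    [NormedAddCommGroup E] [NormedSpace ℝ E] [CompleteSpace E]
    [NormedAddCommGroup Et] [NormedSpace ℝ Et] [CompleteSpace Et]
    (Dp : Set D) (hDclosed : IsClosed Dp) (hD0 : (0 : D) ∈ Dp)
    (hDadd : ∀ x ∈ Dp, ∀ y ∈ Dp, x + y ∈ Dp)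
    (hDsmul : ∀ a : ℝ, 0 ≤ a → ∀ x ∈ Dp, a • x ∈ Dp)
    (hDcone : ∀ x : D, x ∈ Dp → -x ∈ Dp → x = 0)
    (Ep : Set E) (hEclosed : IsClosed Ep) (hE0 : (0 : E) ∈ Ep)
    (hEadd : ∀ x ∈ Ep, ∀ y ∈ Ep, x + y ∈ Ep)
    (hEsmul : ∀ a : ℝ, 0 ≤ a → ∀ x ∈ Ep, a • x ∈ Ep)
    (hEcone : ∀ x : E, x ∈ Ep → -x ∈ Ep → x = 0)
    (Etp : Set Et) (hEtclosed : IsClosed Etp) (hEt0 : (0 : Et) ∈ Etp)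
    (hEtadd : ∀ x ∈ Etp, ∀ y ∈ Etp, x + y ∈ Etp)
    (hEtsmul : ∀ a : ℝ, 0 ≤ a → ∀ x ∈ Etp, a • x ∈ Etp)
    (hEtcone : ∀ x : Et, x ∈ Etp → -x ∈ Etp → x = 0)
    (hEtgen : ∀ x : Et, ∃ a ∈ Etp, ∃ b ∈ Etp, x = a - b)
    (hEtnormal : ∃ M : ℝ, 1 ≤ M ∧ ∀ x y : Et, x ∈ Etp → y - x ∈ Etp → ‖x‖ ≤ M * ‖y‖)
    (J : D →L[ℝ] E) (hJpos : ∀ x ∈ Dp, J x ∈ Ep)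
    (Jt : D →L[ℝ] Et) (hJtbipos : ∀ x : D, Jt x ∈ Etp ↔ x ∈ Dp)
    (hJtmaj : ∀ z : Et, ∃ x : D, Jt x - z ∈ Etp) :
    ∃ c : ℝ, 0 ≤ c ∧
      ∀ (X : Type u) [NormedAddCommGroup X] [NormedSpace ℝ X] [CompleteSpace X]
        (Xp : Set X), IsClosed Xp → (0 : X) ∈ Xp →
        (∀ x ∈ Xp, ∀ y ∈ Xp, x + y ∈ Xp) →
        (∀ a : ℝ, 0 ≤ a → ∀ x ∈ Xp, a • x ∈ Xp) →
        (∀ x : X, x ∈ Xp → -x ∈ Xp → x = 0) →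
        ∀ T : X →L[ℝ] D, (∀ x ∈ Xp, T x ∈ Dp) →
        ∀ y' z' : E →L[ℝ] ℝ, (∀ e ∈ Ep, 0 ≤ y' e) → (∀ e ∈ Ep, 0 ≤ z' e) →
        ‖(y' - z').comp (J.comp T)‖ ≤ c * ‖Jt.comp T‖ * (‖y'‖ + ‖z'‖) := by
  let P : ProperCone ℝ Et :=
    { carrier := Etp
      zero_mem' := hEt0
      add_mem' := fun {x y} hx hy => hEtadd x hx y hy
      smul_mem' := fun a x hx => hEtsmul a a.2 x hx
      isClosed' := hEtclosed }
  obtain ⟨c, hc, hbound⟩ :=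
    stmt_9_general Ep P J Jt (fun x hx => hJpos x ((hJtbipos x).1 hx)) hJtmaj
  exact ⟨c, hc, fun X _ _ _ _ _ _ _ _ _ T _ y' z' hy' hz' => hbound X T y' z' hy' hz'⟩
end

section
/- Let X and X̃ be ordered Banach spaces with X_+ generating in X, let Y be a Banach space, and let (F(t))_{t ∈ [0,1]} be a family of bounded linear operators X̃ → Y such that for each x ∈ X̃ the orbit t ↦ F(t)x is strongly (Bochner) measurable on [0,1]. Let J : X̃ → X be a positive bounded linear operator and assume: (a) there is a sequence (R_n) of positive bounded linear operators X → X̃ such that (J R_n) converges strongly to the identity of X and (R_n J) converges strongly to the identity of X̃; (b) there exists M̃ ≥ 0 such that ∫₀¹ ‖F(t)x‖ dt ≤ M̃ ‖Jx‖ for every x ∈ X̃_+. Then there exists M ≥ 0 such that ∫₀¹ ‖F(t)x‖ dt ≤ M ‖Jx‖ for every x ∈ X̃. -/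
open MeasureTheory

/-!
The functional `p x = ∫ ‖F t x‖ dt` is subadditive and, by Fatou's lemma, lower semicontinuous.
By the open mapping theorem for closed cones, `J x = a - b` with `a, b` positive and of norm at
most `K ‖J x‖`. Since `Rₙ (J x) = Rₙ a - Rₙ b` with `Rₙ a` and `Rₙ b` positive, hypothesis (b)
bounds `p (Rₙ (J x))` by `M̃ (‖J (Rₙ a)‖ + ‖J (Rₙ b)‖)`, which tends to `M̃ (‖a‖ + ‖b‖)`, while
`Rₙ (J x)` tends to `x`.
-/

open Filter Function Set Metric Topology
open scoped NNReal ENNReal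

section OpenMapping

variable {E F : Type*} [SeminormedAddCommGroup E]

theorem exists_closure_image_inter_closedBall_mem_nhds_zero [SeminormedAddCommGroup F]
    [CompleteSpace F] (S : AddSubmonoid E) (f : E →+ F) (hf : SurjOn f S univ) :
    ∃ r : ℝ, closure (f '' (S ∩ closedBall 0 r)) ∈ 𝓝 0 := by
  have hcover : ⋃ n : ℕ, closure (f '' (S ∩ closedBall 0 (n : ℝ))) = univ := by
    refine eq_univ_of_forall fun y => ?_
    obtain ⟨c, hc, rfl⟩ := hf (mem_univ y)
    obtain ⟨n, hn⟩ := exists_nat_ge ‖c‖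
    exact mem_iUnion.2 ⟨n, subset_closure ⟨c, ⟨hc, mem_closedBall_zero_iff.2 hn⟩, rfl⟩⟩
  obtain ⟨n, y₀, hy₀⟩ := nonempty_interior_of_iUnion_of_closed (fun _ => isClosed_closure) hcover
  -- Adding the image of a preimage of `-y₀` in `S` moves the neighbourhood of `y₀` to one of `0`.
  obtain ⟨c₀, hc₀, hfc₀⟩ := hf (mem_univ (-y₀))
  have htranslate : ∀ᶠ y in 𝓝 (0 : F), y + y₀ ∈ closure (f '' (S ∩ closedBall 0 (n : ℝ))) :=
    (continuous_add_const y₀).tendsto' 0 y₀ (zero_add y₀) (mem_interior_iff_mem_nhds.1 hy₀)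
  have hmaps : MapsTo (· + f c₀) (f '' (S ∩ closedBall 0 (n : ℝ)))
      (f '' (S ∩ closedBall 0 (n + ‖c₀‖))) := by
    rintro _ ⟨c, ⟨hcS, hcn⟩, rfl⟩
    refine ⟨c + c₀, ⟨S.add_mem hcS hc₀, mem_closedBall_zero_iff.2 ?_⟩, map_add f c c₀⟩
    exact norm_add_le_of_le (mem_closedBall_zero_iff.1 hcn) le_rfl
  refine ⟨n + ‖c₀‖, mem_of_superset htranslate fun y hy => ?_⟩
  simpa only [hfc₀, add_neg_cancel_right] using
    map_mem_closure (continuous_add_const (f c₀)) hy hmaps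

theorem exists_mem_cone_approx_preimage_norm_le [NormedSpace ℝ E] [SeminormedAddCommGroup F]
    [NormedSpace ℝ F] [CompleteSpace F] (C : PointedCone ℝ E) (f : E →ₗ[ℝ] F)
    (hf : SurjOn f C univ) :
    ∃ K : ℝ≥0, ∀ y, ∃ c ∈ C, ‖y - f c‖ ≤ 1 / 2 * ‖y‖ ∧ ‖c‖ ≤ K * ‖y‖ := by
  obtain ⟨r, hr⟩ :=
    exists_closure_image_inter_closedBall_mem_nhds_zero C.toAddSubmonoid f.toAddMonoidHom hf
  obtain ⟨δ, hδ, hball⟩ := nhds_basis_closedBall.mem_iff.1 hr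
  refine ⟨(r / δ).toNNReal, fun y => ?_⟩
  rcases (norm_nonneg y).eq_or_lt' with hy | hy
  · exact ⟨0, C.zero_mem, by simp [hy]⟩
  have hnorm : ‖(δ / ‖y‖) • y‖ = δ := by
    rw [norm_smul, Real.norm_of_nonneg (by positivity), div_mul_cancel₀ _ hy.ne']
  obtain ⟨_, ⟨c, ⟨hcC, hcr⟩, rfl⟩, hdist⟩ :=
    mem_closure_iff.1 (hball (mem_closedBall_zero_iff.2 hnorm.le)) (δ / 2) (by positivity)
  have hscale : 0 ≤ ‖y‖ / δ := by positivity
  refine ⟨(‖y‖ / δ) • c, PointedCone.smul_mem C hscale hcC, ?_, ?_⟩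
  · have hrescale : y - f ((‖y‖ / δ) • c) = (‖y‖ / δ) • ((δ / ‖y‖) • y - f c) := by
      rw [smul_sub, smul_smul, div_mul_div_cancel₀ hδ.ne', div_self hy.ne', one_smul, map_smul]
    calc ‖y - f ((‖y‖ / δ) • c)‖ = ‖y‖ / δ * ‖(δ / ‖y‖) • y - f c‖ := by
          rw [hrescale, norm_smul, Real.norm_of_nonneg hscale]
      _ ≤ ‖y‖ / δ * (δ / 2) := by
          gcongr
          exact (dist_eq_norm _ _).symm.trans_le hdist.le
      _ = 1 / 2 * ‖y‖ := by field_simp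
  · calc ‖(‖y‖ / δ) • c‖ = ‖y‖ / δ * ‖c‖ := by
          rw [norm_smul, Real.norm_of_nonneg hscale]
      _ ≤ ‖y‖ / δ * r := by
          gcongr
          exact mem_closedBall_zero_iff.1 hcr
      _ = r / δ * ‖y‖ := by ring
      _ ≤ (r / δ).toNNReal * ‖y‖ := by
          gcongr
          exact Real.le_coe_toNNReal _

theorem exists_mem_preimage_norm_le_of_approx [CompleteSpace E] [NormedAddCommGroup F]
    {S : AddSubmonoid E} (hS : IsClosed (S : Set E)) {f : E →+ F} (hf : Continuous f) {K : ℝ≥0}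
    (happrox : ∀ y, ∃ c ∈ S, ‖y - f c‖ ≤ 1 / 2 * ‖y‖ ∧ ‖c‖ ≤ K * ‖y‖) (y : F) :
    ∃ c ∈ S, f c = y ∧ ‖c‖ ≤ K * ‖y‖ * 2 := by
  choose g hgS hg_approx hg_norm using happrox
  let residual : ℕ → F := fun n => (fun z => z - f (g z))^[n] y
  have residual_succ (n : ℕ) : residual (n + 1) = residual n - f (g (residual n)) :=
    iterate_succ_apply' _ n y
  have hresidual (n : ℕ) : ‖residual n‖ ≤ (1 / 2) ^ n * ‖y‖ := by
    induction n with
    | zero => simp [residual]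
    | succ n ih =>
      rw [residual_succ, pow_succ', mul_assoc]
      exact (hg_approx _).trans (by gcongr)
  have hresidual_zero : Tendsto residual atTop (𝓝 0) := by
    refine squeeze_zero_norm hresidual ?_
    simpa using (tendsto_pow_atTop_nhds_zero_of_lt_one (by norm_num : (0 : ℝ) ≤ 1 / 2)
      (by norm_num)).mul_const ‖y‖
  have hsum_residual (n : ℕ) : f (∑ i ∈ Finset.range n, g (residual i)) = y - residual n := by
    induction n with
    | zero => simp [residual]
    | succ n ih => rw [Finset.sum_range_succ, map_add, ih, residual_succ, sub_add]
  have hterm (n : ℕ) : ‖g (residual n)‖ ≤ K * ‖y‖ * (1 / 2) ^ n :=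
    calc ‖g (residual n)‖ ≤ K * ‖residual n‖ := hg_norm _
      _ ≤ K * ((1 / 2) ^ n * ‖y‖) := by gcongr; exact hresidual n
      _ = K * ‖y‖ * (1 / 2) ^ n := by ring
  have hgeom := hasSum_geometric_two.mul_left (K * ‖y‖)
  have hpartial := (hgeom.summable.of_norm_bounded hterm).hasSum.tendsto_sum_nat
  refine ⟨∑' n, g (residual n), ?_, ?_, tsum_of_norm_bounded hgeom hterm⟩
  · exact hS.mem_of_tendsto hpartial (.of_forall fun n => S.sum_mem fun _ _ => hgS _)
  · refine tendsto_nhds_unique ((hf.tendsto _).comp hpartial) ?_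
    simpa only [comp_def, hsum_residual, sub_zero] using hresidual_zero.const_sub y

theorem exists_mem_cone_preimage_norm_le [NormedSpace ℝ E] [CompleteSpace E]
    [NormedAddCommGroup F] [NormedSpace ℝ F] [CompleteSpace F] (C : ProperCone ℝ E)
    (f : E →L[ℝ] F) (hf : SurjOn f C univ) :
    ∃ K : ℝ≥0, ∀ y, ∃ c ∈ C, f c = y ∧ ‖c‖ ≤ K * ‖y‖ := by
  obtain ⟨K, hK⟩ := exists_mem_cone_approx_preimage_norm_le C.toPointedCone (f : E →ₗ[ℝ] F) hf
  refine ⟨K * 2, fun y => ?_⟩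
  rw [NNReal.coe_mul, NNReal.coe_ofNat, mul_right_comm]
  exact exists_mem_preimage_norm_le_of_approx (S := C.toPointedCone.toAddSubmonoid) C.isClosed
    (f := (f : E →+ F)) f.continuous hK y

end OpenMapping

theorem exists_sub_eq_and_norm_le_of_isReproducing {X : Type*} [NormedAddCommGroup X]
    [NormedSpace ℝ X] [CompleteSpace X] (C : ProperCone ℝ X)
    (hC : (C.toPointedCone : ConvexCone ℝ X).IsReproducing) :
    ∃ K : ℝ≥0, ∀ x, ∃ a ∈ C, ∃ b ∈ C, a - b = x ∧ ‖a‖ ≤ K * ‖x‖ ∧ ‖b‖ ≤ K * ‖x‖ := by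
  let pairCone : ProperCone ℝ (X × X) := C.comap (.fst ℝ X X) ⊓ C.comap (.snd ℝ X X)
  have hsurj :
      SurjOn (ContinuousLinearMap.fst ℝ X X - ContinuousLinearMap.snd ℝ X X) pairCone univ := by
    intro x hx
    obtain ⟨a, ha, b, hb, rfl⟩ := hC.sub_eq_univ.symm.subset hx
    exact ⟨(a, b), ⟨ha, hb⟩, rfl⟩
  obtain ⟨K, hK⟩ := exists_mem_cone_preimage_norm_le pairCone _ hsurj
  refine ⟨K, fun x => ?_⟩
  obtain ⟨⟨a, b⟩, ⟨ha, hb⟩, hsub, hnorm⟩ := hK x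
  exact ⟨a, ha, b, hb, hsub, (norm_fst_le (a, b)).trans hnorm, (norm_snd_le (a, b)).trans hnorm⟩

theorem lowerSemicontinuous_lintegral_of_ae {α E : Type*} [MeasurableSpace α] {μ : Measure α}
    [TopologicalSpace E] [FirstCountableTopology E] {f : E → α → ℝ≥0∞}
    (hmeas : ∀ x, AEMeasurable (f x) μ) (hf : ∀ᵐ t ∂μ, LowerSemicontinuous fun x => f x t) :
    LowerSemicontinuous fun x => ∫⁻ t, f x t ∂μ :=
  lowerSemicontinuous_iff_le_liminf.2 fun x =>
    (lintegral_mono_ae <| hf.mono fun _ ht => ht.le_liminf x).trans (lintegral_liminf_le' hmeas)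

theorem exists_forall_le_ofReal_mul_norm_of_forall_mem_cone {X E ι : Type*} [NormedAddCommGroup X]
    [NormedSpace ℝ X] [CompleteSpace X] [AddCommGroup E] [TopologicalSpace E]
    (C : ProperCone ℝ X) (hC : (C.toPointedCone : ConvexCone ℝ X).IsReproducing)
    {p : E → ℝ≥0∞} (hp : LowerSemicontinuous p) (hp_sub : ∀ x y, p (x - y) ≤ p x + p y)
    (J : E → X) (R : ι → X →+ E) {l : Filter ι} [l.NeBot]
    (hJR : ∀ x ∈ C, Tendsto (fun i => J (R i x)) l (𝓝 x))
    (hRJ : ∀ x, Tendsto (fun i => R i (J x)) l (𝓝 x)) {M : ℝ} (hM : 0 ≤ M)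
    (hbound : ∀ i, ∀ a ∈ C, p (R i a) ≤ ENNReal.ofReal (M * ‖J (R i a)‖)) :
    ∃ M' : ℝ, 0 ≤ M' ∧ ∀ x, p x ≤ ENNReal.ofReal (M' * ‖J x‖) := by
  obtain ⟨K, hK⟩ := exists_sub_eq_and_norm_le_of_isReproducing C hC
  refine ⟨M * (K + K), by positivity, fun x => ?_⟩
  obtain ⟨a, ha, b, hb, hab, hna, hnb⟩ := hK (J x)
  have hpR (i : ι) : p (R i (J x)) ≤ ENNReal.ofReal (M * (‖J (R i a)‖ + ‖J (R i b)‖)) := by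
    rw [← hab, map_sub, mul_add, ENNReal.ofReal_add (by positivity) (by positivity)]
    exact (hp_sub _ _).trans (add_le_add (hbound i a ha) (hbound i b hb))
  have hlim : Tendsto (fun i => ENNReal.ofReal (M * (‖J (R i a)‖ + ‖J (R i b)‖))) l
      (𝓝 (ENNReal.ofReal (M * (‖a‖ + ‖b‖)))) :=
    ENNReal.tendsto_ofReal (((hJR a ha).norm.add (hJR b hb).norm).const_mul M)
  calc p x ≤ liminf p (𝓝 x) := hp.le_liminf x
    _ ≤ liminf (fun i => p (R i (J x))) l := liminf_le_liminf_of_le (hRJ x)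
    _ ≤ liminf (fun i => ENNReal.ofReal (M * (‖J (R i a)‖ + ‖J (R i b)‖))) l :=
        liminf_le_liminf (.of_forall hpR)
    _ = ENNReal.ofReal (M * (‖a‖ + ‖b‖)) := hlim.liminf_eq
    _ ≤ ENNReal.ofReal (M * (K + K) * ‖J x‖) := by
        rw [mul_assoc, add_mul]
        gcongr

theorem stmt_10_general {α X E Y ι : Type*} [MeasurableSpace α] {μ : Measure α}
    [NormedAddCommGroup X] [NormedSpace ℝ X] [CompleteSpace X]
    [AddCommGroup E] [Module ℝ E] [TopologicalSpace E] [FirstCountableTopology E]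
    [SeminormedAddCommGroup Y] [NormedSpace ℝ Y]
    (C : ProperCone ℝ X) (hC : (C.toPointedCone : ConvexCone ℝ X).IsReproducing) (D : Set E)
    (F : α → E →L[ℝ] Y) (hF : ∀ x, AEStronglyMeasurable (fun t => F t x) μ)
    (J : E →ₗ[ℝ] X) (R : ι → X →ₗ[ℝ] E) (hR : ∀ i, MapsTo (R i) C D) {l : Filter ι} [l.NeBot]
    (hJR : ∀ x ∈ C, Tendsto (fun i => J (R i x)) l (𝓝 x))
    (hRJ : ∀ x, Tendsto (fun i => R i (J x)) l (𝓝 x)) {M : ℝ} (hM : 0 ≤ M)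
    (hbound : ∀ x ∈ D, ∫⁻ t, ‖F t x‖ₑ ∂μ ≤ ENNReal.ofReal (M * ‖J x‖)) :
    ∃ M' : ℝ, 0 ≤ M' ∧ ∀ x, ∫⁻ t, ‖F t x‖ₑ ∂μ ≤ ENNReal.ofReal (M' * ‖J x‖) := by
  have hlsc : LowerSemicontinuous fun x => ∫⁻ t, ‖F t x‖ₑ ∂μ :=
    lowerSemicontinuous_lintegral_of_ae (fun x => (hF x).enorm) <| .of_forall fun t =>
      (F t).continuous.enorm.lowerSemicontinuous
  have hsub (x y : E) : ∫⁻ t, ‖F t (x - y)‖ₑ ∂μ ≤ ∫⁻ t, ‖F t x‖ₑ ∂μ + ∫⁻ t, ‖F t y‖ₑ ∂μ := by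
    simp only [map_sub, ← lintegral_add_left' (hF x).enorm]
    exact lintegral_mono fun _ => enorm_sub_le
  exact exists_forall_le_ofReal_mul_norm_of_forall_mem_cone C hC hlsc hsub J
    (fun i => (R i : X →+ E)) hJR hRJ hM fun i a ha => hbound _ (hR i ha)

/-- Let `X`, `X̃` be ordered Banach spaces with `Xp` generating, let `Y` be a Banach space,
and let `(F t)_{t ∈ [0,1]}` be a family of bounded operators `X̃ → Y` with strongly
measurable orbits.  Let `J : X̃ → X` be positive and bounded, assume
(a) there are positive operators `Rₙ : X → X̃` with `J Rₙ → id` strongly on `X` and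
`Rₙ J → id` strongly on `X̃`, and (b) there is `M̃ ≥ 0` with
`∫₀¹ ‖F t x‖ dt ≤ M̃ ‖J x‖` for every `x ∈ X̃₊`.  Then there is `M ≥ 0` with
`∫₀¹ ‖F t x‖ dt ≤ M ‖J x‖` for every `x ∈ X̃`. -/
theorem stmt_10
    {X Xt Y : Type*}
    [NormedAddCommGroup X] [NormedSpace ℝ X] [CompleteSpace X]
    [NormedAddCommGroup Xt] [NormedSpace ℝ Xt] [CompleteSpace Xt]
    [NormedAddCommGroup Y] [NormedSpace ℝ Y] [CompleteSpace Y]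
    (Xp : Set X) (hXclosed : IsClosed Xp) (hX0 : (0 : X) ∈ Xp)
    (hXadd : ∀ x ∈ Xp, ∀ y ∈ Xp, x + y ∈ Xp)
    (hXsmul : ∀ a : ℝ, 0 ≤ a → ∀ x ∈ Xp, a • x ∈ Xp)
    (hXcone : ∀ x : X, x ∈ Xp → -x ∈ Xp → x = 0)
    (hXgen : ∀ x : X, ∃ a ∈ Xp, ∃ b ∈ Xp, x = a - b)
    (Xtp : Set Xt) (hXtclosed : IsClosed Xtp) (hXt0 : (0 : Xt) ∈ Xtp)
    (hXtadd : ∀ x ∈ Xtp, ∀ y ∈ Xtp, x + y ∈ Xtp)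
    (hXtsmul : ∀ a : ℝ, 0 ≤ a → ∀ x ∈ Xtp, a • x ∈ Xtp)
    (hXtcone : ∀ x : Xt, x ∈ Xtp → -x ∈ Xtp → x = 0)
    (F : ℝ → Xt →L[ℝ] Y)
    (hFmeas : ∀ x : Xt, AEStronglyMeasurable (fun t => F t x)
      (volume.restrict (Set.Icc (0:ℝ) 1)))
    (J : Xt →L[ℝ] X)
    (hJpos : ∀ x ∈ Xtp, J x ∈ Xp)
    (R : ℕ → X →L[ℝ] Xt)
    (hRpos : ∀ n : ℕ, ∀ x ∈ Xp, R n x ∈ Xtp)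
    (hJR : ∀ x : X, Filter.Tendsto (fun n => J (R n x)) Filter.atTop (nhds x))
    (hRJ : ∀ x : Xt, Filter.Tendsto (fun n => R n (J x)) Filter.atTop (nhds x))
    (Mt : ℝ) (hMt : 0 ≤ Mt)
    (hbound : ∀ x ∈ Xtp,
      (∫⁻ t in Set.Icc (0:ℝ) 1, (‖F t x‖₊ : ENNReal) ∂volume)
        ≤ ENNReal.ofReal (Mt * ‖J x‖)) :
    ∃ M : ℝ, 0 ≤ M ∧ ∀ x : Xt,
      (∫⁻ t in Set.Icc (0:ℝ) 1, (‖F t x‖₊ : ENNReal) ∂volume)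
        ≤ ENNReal.ofReal (M * ‖J x‖) := by
  let C : ProperCone ℝ X :=
    { carrier := Xp, zero_mem' := hX0, add_mem' := fun hx hy => hXadd _ hx _ hy,
      smul_mem' := fun a x hx => hXsmul a a.2 x hx, isClosed' := hXclosed }
  have hC : (C.toPointedCone : ConvexCone ℝ X).IsReproducing := .of_univ_subset fun x _ =>
    let ⟨a, ha, b, hb, hx⟩ := hXgen x
    ⟨a, ha, b, hb, hx.symm⟩
  exact stmt_10_general C hC Xtp F hFmeas J (fun n => (R n : X →ₗ[ℝ] Xt)) hRpos
    (fun x _ => hJR x) hRJ hMt hbound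
end

section
/- Let U be a Banach space, let Z be an ordered Banach space with normal cone, and let T : U → Z be a bounded linear operator. Then the following are equivalent: (i) T maps the closed unit ball of U into an order-bounded subset of Z, i.e. there exist a, b ∈ Z with T(B_U) ⊆ [a, b]; (ii) there exist an ordered Banach space X̃ possessing a unit, a bounded linear operator T₁ : U → X̃, and a positive bounded linear operator T₂ : X̃ → Z such that T = T₂ ∘ T₁. -/
/-!
If `T` maps the unit ball of `U` into `[a, b]`, then `‖u‖ ≤ t` implies `T u + t • b ≥ 0`, so
`(u, t) ↦ T u + t • b` is positive on `U × ℝ` ordered by the cone `{(u, t) | ‖u‖ ≤ t}`, which has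
the unit `(0, 1)`. To land in the universe of `Z`, `U` is first replaced by `U ⧸ ker T`: every
element of its closed unit ball lifts to an element of `U` of norm at most `2`, so only the
interval has to be doubled.

Conversely, if `e` is a unit of a Banach space with closed cone, then `[-e, e]` is closed, convex,
balanced and absorbent, hence a neighbourhood of zero by Baire's theorem. It absorbs the bounded
image of the unit ball under `T₁`, and the positive map `T₂` carries the resulting interval to an
order interval of `Z`.
-/

open Bornology Filter Metric Set Topology
open scoped Pointwise

section Barrel

variable {E : Type*} [AddCommGroup E] [Module ℝ E] [TopologicalSpace E] [ContinuousConstSMul ℝ E]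
  {s : Set E}

theorem lowerSemicontinuous_gauge_of_isClosed (hclosed : IsClosed s) (hconv : Convex ℝ s)
    (habs : Absorbent ℝ s) : LowerSemicontinuous (gauge s) := by
  rw [lowerSemicontinuous_iff_isClosed_preimage]
  intro c
  rcases lt_or_ge c 0 with hc | hc
  · have hempty : gauge s ⁻¹' Iic c = ∅ :=
      eq_empty_of_forall_notMem fun x hx ↦ (hc.trans_le (gauge_nonneg x)).not_ge hx
    exact hempty ▸ isClosed_empty
  · have hinter : gauge s ⁻¹' Iic c = ⋂ (r : ℝ) (_ : c < r), r • s :=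
      setOfPred_gauge_le_eq hconv habs.zero_mem habs hc
    rw [hinter]
    exact isClosed_biInter fun r hr ↦ hclosed.smul_of_ne_zero (hc.trans_lt hr).ne'

theorem mem_nhds_zero_of_isClosed_of_balanced_of_absorbent [BarrelledSpace ℝ E]
    (hclosed : IsClosed s) (hconv : Convex ℝ s) (hbal : Balanced ℝ s) (habs : Absorbent ℝ s) :
    s ∈ 𝓝 0 := by
  have hcont : Continuous (gauge s) :=
    (gaugeSeminorm hbal hconv habs).continuous_of_lowerSemicontinuous
      (lowerSemicontinuous_gauge_of_isClosed hclosed hconv habs)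
  have hlt : {x | gauge s x < 1} ∈ 𝓝 (0 : E) :=
    (isOpen_lt hcont continuous_const).mem_nhds (by simp)
  exact mem_of_superset hlt (setOfPred_gauge_lt_one_subset_self hconv habs.zero_mem habs)

end Barrel

/-- The wedge with underlying set `P`, bundled as a pointed cone. The closure conditions are stated
for real scalars, as they are for sets of positive elements of a pre-ordered Banach space. -/
def pointedConeOfWedge {E : Type*} [AddCommGroup E] [Module ℝ E] (P : Set E) (hzero : 0 ∈ P)
    (hadd : ∀ x ∈ P, ∀ y ∈ P, x + y ∈ P) (hsmul : ∀ a : ℝ, 0 ≤ a → ∀ x ∈ P, a • x ∈ P) :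
    PointedCone ℝ E where
  carrier := P
  zero_mem' := hzero
  add_mem' hx hy := hadd _ hx _ hy
  smul_mem' c x hx := hsmul c c.2 x hx

section ConeIcc

variable {E F : Type*} [AddCommGroup E] [Module ℝ E] [AddCommGroup F] [Module ℝ F]
  {C : PointedCone ℝ E} {D : PointedCone ℝ F} {a b e : E}

/-- The order interval `[a, b]` of the preorder `x ≤ y ↔ y - x ∈ C`. The preorder is given by a cone
rather than by a `Preorder` instance so that several cones can be compared. -/
def coneIcc (C : PointedCone ℝ E) (a b : E) : Set E :=
  {x | x - a ∈ C ∧ b - x ∈ C}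

theorem convex_coneIcc : Convex ℝ (coneIcc C a b) := by
  rintro x ⟨hax, hxb⟩ y ⟨hay, hyb⟩ s t hs ht hst
  obtain rfl : s = 1 - t := eq_sub_of_add_eq hst
  have hlower : (1 - t) • x + t • y - a = (1 - t) • (x - a) + t • (y - a) := by module
  have hupper : b - ((1 - t) • x + t • y) = (1 - t) • (b - x) + t • (b - y) := by module
  exact ⟨hlower ▸ C.convex hax hay hs ht hst, hupper ▸ C.convex hxb hyb hs ht hst⟩

theorem balanced_coneIcc_neg_self : Balanced ℝ (coneIcc C (-e) e) := by
  rw [balanced_iff_neg_mem convex_coneIcc]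
  rintro x ⟨hex, hxe⟩
  exact ⟨by rwa [neg_sub_neg], by rwa [sub_neg_eq_add, add_comm, ← sub_neg_eq_add]⟩

theorem smul_coneIcc {r : ℝ} (hr : 0 < r) : r • coneIcc C a b = coneIcc C (r • a) (r • b) := by
  ext x
  have hlower : x - r • a = r • (r⁻¹ • x - a) := by rw [smul_sub, smul_inv_smul₀ hr.ne']
  have hupper : r • b - x = r • (b - r⁻¹ • x) := by rw [smul_sub, smul_inv_smul₀ hr.ne']
  rw [mem_smul_set_iff_inv_smul_mem₀ hr.ne', coneIcc, coneIcc, mem_ofPred_eq, mem_ofPred_eq,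
    hlower, hupper, C.smul_mem_iff hr, C.smul_mem_iff hr]

theorem isClosed_coneIcc [TopologicalSpace E] [ContinuousSub E] (hC : IsClosed (C : Set E)) :
    IsClosed (coneIcc C a b) :=
  (hC.preimage (continuous_sub_right a)).inter (hC.preimage (continuous_sub_left b))

theorem mapsTo_coneIcc_of_mapsTo {f : E →ₗ[ℝ] F} (hf : ∀ x ∈ C, f x ∈ D) :
    MapsTo f (coneIcc C a b) (coneIcc D (f a) (f b)) := by
  rintro x ⟨hax, hxb⟩
  exact ⟨map_sub f x a ▸ hf _ hax, map_sub f b x ▸ hf _ hxb⟩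

theorem mapsTo_closedBall_coneIcc_smul {U : Type*} [SeminormedAddCommGroup U] [NormedSpace ℝ U]
    {f : U →ₗ[ℝ] E} (hf : MapsTo f (closedBall 0 1) (coneIcc C a b)) {r : ℝ} (hr : 0 < r) :
    MapsTo f (closedBall 0 r) (coneIcc C (r • a) (r • b)) := by
  intro u hu
  rw [← smul_coneIcc hr, mem_smul_set_iff_inv_smul_mem₀ hr.ne', ← map_smul]
  apply hf
  rw [mem_closedBall_zero_iff] at hu ⊢
  rw [norm_smul_of_nonneg (inv_nonneg.2 hr.le)]
  exact inv_mul_le_one_of_le₀ hu hr.le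

end ConeIcc

section OrderUnit

variable {E F U : Type*} [AddCommGroup E] [Module ℝ E] [AddCommGroup F] [Module ℝ F]
  [SeminormedAddCommGroup U] [NormedSpace ℝ U] {C : PointedCone ℝ E} {D : PointedCone ℝ F} {e : E}

/-- `e` is a unit of the space preordered by `C`: it is positive and the intervals `[-r • e, r • e]`
with `0 < r` cover the space. -/
def IsOrderUnit (C : PointedCone ℝ E) (e : E) : Prop :=
  e ∈ C ∧ ∀ x, ∃ r : ℝ, 0 < r ∧ x + r • e ∈ C ∧ r • e - x ∈ C

theorem IsOrderUnit.absorbent_coneIcc (he : IsOrderUnit C e) :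
    Absorbent ℝ (coneIcc C (-e) e) := by
  intro x
  obtain ⟨r, hr, hlower, hupper⟩ := he.2 x
  have hx : x ∈ r • coneIcc C (-e) e := by
    rw [smul_coneIcc hr, smul_neg]
    exact ⟨by rwa [sub_neg_eq_add], hupper⟩
  rw [absorbs_iff_norm]
  refine ⟨‖r‖, fun c hc ↦ singleton_subset_iff.2 ?_⟩
  exact balanced_coneIcc_neg_self.smul_mono hc hx

variable [TopologicalSpace E] [IsTopologicalAddGroup E] [ContinuousConstSMul ℝ E]
  [BarrelledSpace ℝ E]

theorem IsOrderUnit.coneIcc_mem_nhds_zero (he : IsOrderUnit C e) (hC : IsClosed (C : Set E)) :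
    coneIcc C (-e) e ∈ 𝓝 0 :=
  mem_nhds_zero_of_isClosed_of_balanced_of_absorbent (isClosed_coneIcc hC) convex_coneIcc
    balanced_coneIcc_neg_self he.absorbent_coneIcc

theorem IsOrderUnit.exists_subset_coneIcc_of_isVonNBounded (he : IsOrderUnit C e)
    (hC : IsClosed (C : Set E)) {B : Set E} (hB : IsVonNBounded ℝ B) :
    ∃ a b : E, B ⊆ coneIcc C a b := by
  obtain ⟨r, hr, hsub⟩ := (hB (he.coneIcc_mem_nhds_zero hC)).exists_pos
  exact ⟨r • -e, r • e, (hsub r (le_abs_self r)).trans_eq (smul_coneIcc hr)⟩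

theorem IsOrderUnit.exists_mapsTo_closedBall_coneIcc_comp (he : IsOrderUnit C e)
    (hC : IsClosed (C : Set E)) (f : U →L[ℝ] E) {g : E →ₗ[ℝ] F} (hg : ∀ x ∈ C, g x ∈ D) :
    ∃ a b : F, MapsTo (g ∘ f) (closedBall 0 1) (coneIcc D a b) := by
  have hbounded : IsVonNBounded ℝ (f '' closedBall 0 1) :=
    (NormedSpace.isVonNBounded_closedBall ℝ U 1).image f
  obtain ⟨a, b, hsub⟩ := he.exists_subset_coneIcc_of_isVonNBounded hC hbounded
  exact ⟨g a, g b, (mapsTo_coneIcc_of_mapsTo hg).comp (mapsTo_iff_image_subset.2 hsub)⟩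

end OrderUnit

section NormCone

variable {V : Type*} [SeminormedAddCommGroup V] [NormedSpace ℝ V]

/-- The cone `{(v, t) | ‖v‖ ≤ t}` in `V × ℝ`, whose order has the unit `(0, 1)` and for which
`[-(0, 1), (0, 1)]` contains the unit ball of `V`. -/
def normCone (V : Type*) [SeminormedAddCommGroup V] [NormedSpace ℝ V] :
    PointedCone ℝ (V × ℝ) where
  carrier := {x | ‖x.1‖ ≤ x.2}
  zero_mem' := by simp
  add_mem' {x y} hx hy := (norm_add_le x.1 y.1).trans (add_le_add hx hy)
  smul_mem' c x hx := by
    change ‖(c : ℝ) • x.1‖ ≤ c * x.2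
    rw [norm_smul_of_nonneg c.2]
    exact mul_le_mul_of_nonneg_left hx c.2

theorem mem_normCone {x : V × ℝ} : x ∈ normCone V ↔ ‖x.1‖ ≤ x.2 := Iff.rfl

theorem isClosed_normCone : IsClosed (normCone V : Set (V × ℝ)) :=
  isClosed_le continuous_fst.norm continuous_snd

theorem isOrderUnit_normCone : IsOrderUnit (normCone V) (0, 1) := by
  refine ⟨by simp [mem_normCone], fun ⟨v, t⟩ ↦ ⟨‖v‖ + |t| + 1, by positivity, ?_, ?_⟩⟩
  · simp only [mem_normCone, Prod.mk_add_mk, Prod.smul_mk, smul_zero, smul_eq_mul, add_zero]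
    linarith [neg_abs_le t]
  · simp only [mem_normCone, Prod.mk_sub_mk, Prod.smul_mk, smul_zero, smul_eq_mul, zero_sub,
      norm_neg]
    linarith [le_abs_self t]

end NormCone

section NormCone

variable {V Z : Type*} [NormedAddCommGroup V] [NormedSpace ℝ V] [AddCommGroup Z] [Module ℝ Z]
  {x : V × ℝ} {C : PointedCone ℝ Z} {a b : Z}

theorem eq_zero_of_mem_normCone_of_neg_mem (hx : x ∈ normCone V) (hneg : -x ∈ normCone V) :
    x = 0 := by
  rw [mem_normCone] at hx hneg
  rw [Prod.fst_neg, Prod.snd_neg, norm_neg] at hneg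
  have hnonneg := norm_nonneg x.1
  exact Prod.ext (norm_le_zero_iff.1 (by linarith)) (show x.2 = 0 by linarith)

theorem map_fst_add_snd_smul_mem_of_mem_normCone {f : V →ₗ[ℝ] Z}
    (hf : MapsTo f (closedBall 0 1) (coneIcc C a b)) (hx : x ∈ normCone V) :
    f x.1 + x.2 • b ∈ C := by
  obtain ⟨v, t⟩ := x
  have hv : ‖v‖ ≤ t := hx
  rcases (norm_nonneg v).trans hv |>.eq_or_lt with rfl | ht
  · simp [norm_le_zero_iff.1 hv]
  · have hneg : -v ∈ closedBall 0 t := by rwa [mem_closedBall_zero_iff, norm_neg]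
    have hupper : t • b - f (-v) ∈ C := (mapsTo_closedBall_coneIcc_smul hf ht hneg).2
    rwa [map_neg, sub_neg_eq_add, add_comm] at hupper

end NormCone

theorem mapsTo_liftQ_closedBall_coneIcc {U Z : Type*} [SeminormedAddCommGroup U] [NormedSpace ℝ U]
    [AddCommGroup Z] [Module ℝ Z] {C : PointedCone ℝ Z} {a b : Z} {f : U →ₗ[ℝ] Z}
    (hf : MapsTo f (closedBall 0 1) (coneIcc C a b)) {K : Submodule ℝ U} (hK : K ≤ f.ker) :
    MapsTo (K.liftQ f hK) (closedBall 0 1) (coneIcc C ((2 : ℝ) • a) ((2 : ℝ) • b)) := by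
  intro q hq
  obtain ⟨u, rfl, hu⟩ := Submodule.Quotient.norm_mk_lt q one_pos
  have hnorm : u ∈ closedBall 0 2 := by
    rw [mem_closedBall_zero_iff] at hq ⊢
    linarith
  exact mapsTo_closedBall_coneIcc_smul hf two_pos hnorm

section Shrink

variable {V : Type*} [NormedAddCommGroup V] [NormedSpace ℝ V] [Small.{u} V]

/-- The identification of a normed space with its copy in a smaller universe, as an isometry. -/
noncomputable def shrinkLinearIsometryEquiv (V : Type*) [NormedAddCommGroup V] [NormedSpace ℝ V]
    [Small.{u} V] : Shrink.{u} V ≃ₗᵢ[ℝ] V where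
  toLinearEquiv := Shrink.linearEquiv ℝ V
  norm_map' _ := rfl

theorem completeSpace_shrink [CompleteSpace V] : CompleteSpace (Shrink.{u} V) :=
  (completeSpace_congr (e := (shrinkLinearIsometryEquiv V).toEquiv)
    (shrinkLinearIsometryEquiv V).isometry.isUniformEmbedding).2 inferInstance

theorem exists_banach_factorization_mapsTo_coneIcc {U : Type*} {Z : Type u}
    [SeminormedAddCommGroup U] [NormedSpace ℝ U] [CompleteSpace U]
    [AddCommGroup Z] [Module ℝ Z] [TopologicalSpace Z] [T1Space Z]
    {C : PointedCone ℝ Z} {a b : Z} {T : U →L[ℝ] Z}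
    (hT : MapsTo T (closedBall 0 1) (coneIcc C a b)) :
    ∃ (V : Type u) (_ : NormedAddCommGroup V) (_ : NormedSpace ℝ V) (_ : CompleteSpace V)
      (p : U →L[ℝ] V) (S : V →L[ℝ] Z),
      T = S.comp p ∧ MapsTo S (closedBall 0 1) (coneIcc C ((2 : ℝ) • a) ((2 : ℝ) • b)) := by
  have hclosed : IsClosed (T.ker : Set U) := T.isClosed_ker
  have hsmall : Small.{u} (U ⧸ T.ker) :=
    small_of_injective T.toLinearMap.quotKerEquivRange.injective
  let i := shrinkLinearIsometryEquiv.{u} (U ⧸ T.ker)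
  refine ⟨Shrink.{u} (U ⧸ T.ker), inferInstance, inferInstance, completeSpace_shrink,
    (i.symm.toContinuousLinearEquiv : (U ⧸ T.ker) →L[ℝ] _).comp T.ker.mkQL,
    (T.ker.liftQL T le_rfl).comp (i.toContinuousLinearEquiv : _ →L[ℝ] (U ⧸ T.ker)), ?_, ?_⟩
  · ext u
    simp
  · intro v hv
    have hiv : i v ∈ closedBall 0 1 := by
      rwa [mem_closedBall_zero_iff, i.norm_map, ← mem_closedBall_zero_iff]
    exact mapsTo_liftQ_closedBall_coneIcc hT le_rfl hiv

end Shrink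

theorem stmt_11_general
    {U : Type*} {Z : Type u}
    [SeminormedAddCommGroup U] [NormedSpace ℝ U] [CompleteSpace U]
    [AddCommGroup Z] [Module ℝ Z] [TopologicalSpace Z] [T1Space Z] [ContinuousAdd Z]
    [ContinuousSMul ℝ Z] (C : PointedCone ℝ Z) (T : U →L[ℝ] Z) :
    (∃ a b : Z, ∀ u : U, ‖u‖ ≤ 1 → T u - a ∈ C ∧ b - T u ∈ C)
      ↔
    (∃ (Xt : Type u) (_ : NormedAddCommGroup Xt) (_ : NormedSpace ℝ Xt)
        (_ : CompleteSpace Xt) (Xtp : Set Xt),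
      IsClosed Xtp ∧ (0 : Xt) ∈ Xtp ∧
      (∀ x ∈ Xtp, ∀ y ∈ Xtp, x + y ∈ Xtp) ∧
      (∀ a : ℝ, 0 ≤ a → ∀ x ∈ Xtp, a • x ∈ Xtp) ∧
      (∀ x : Xt, x ∈ Xtp → -x ∈ Xtp → x = 0) ∧
      (∃ e ∈ Xtp, ∀ x : Xt, ∃ lam : ℝ, 0 < lam ∧
          x + lam • e ∈ Xtp ∧ lam • e - x ∈ Xtp) ∧
      (∃ (T₁ : U →L[ℝ] Xt) (T₂ : Xt →L[ℝ] Z),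
        (∀ x ∈ Xtp, T₂ x ∈ C) ∧ T = T₂.comp T₁)) := by
  constructor
  · rintro ⟨a, b, hT⟩
    obtain ⟨V, _, _, _, p, S, rfl, hS⟩ := exists_banach_factorization_mapsTo_coneIcc
      (C := C) (a := a) (b := b) fun u hu ↦ hT u (mem_closedBall_zero_iff.1 hu)
    refine ⟨V × ℝ, inferInstance, inferInstance, inferInstance, normCone V, isClosed_normCone,
      zero_mem _, fun x hx y hy ↦ add_mem hx hy, fun c hc x hx ↦ (normCone V).smul_mem hc hx,
      fun x ↦ eq_zero_of_mem_normCone_of_neg_mem, ⟨(0, 1), isOrderUnit_normCone⟩,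
      (ContinuousLinearMap.inl ℝ V ℝ).comp p,
      S.coprod (ContinuousLinearMap.toSpanSingleton ℝ ((2 : ℝ) • b)),
      fun x hx ↦ map_fst_add_snd_smul_mem_of_mem_normCone hS hx, ?_⟩
    ext u
    simp
  · rintro ⟨X, _, _, _, P, hclosed, hzero, hadd, hsmul, -, ⟨e, he⟩, T₁, T₂, hpos, rfl⟩
    have hunit : IsOrderUnit (pointedConeOfWedge P hzero hadd hsmul) e := he
    obtain ⟨a, b, hab⟩ := hunit.exists_mapsTo_closedBall_coneIcc_comp hclosed T₁ hpos
    exact ⟨a, b, fun u hu ↦ hab (mem_closedBall_zero_iff.2 hu)⟩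

/-- Let `U` be a Banach space, `Z` an ordered Banach space with normal cone, and
`T : U → Z` bounded linear.  Then `T` maps the closed unit ball of `U` into an
order-bounded subset of `Z` if and only if `T` factorises as `T = T₂ ∘ T₁` through an
ordered Banach space `X̃` possessing a unit `e` (i.e. `X̃ = ⋃_{λ>0} [-λe, λe]`), with
`T₁ : U → X̃` bounded and `T₂ : X̃ → Z` positive and bounded. -/
theorem stmt_11
    {U : Type*} {Z : Type u}
    [NormedAddCommGroup U] [NormedSpace ℝ U] [CompleteSpace U]
    [NormedAddCommGroup Z] [NormedSpace ℝ Z] [CompleteSpace Z]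
    (Zp : Set Z) (hZclosed : IsClosed Zp) (hZ0 : (0 : Z) ∈ Zp)
    (hZadd : ∀ x ∈ Zp, ∀ y ∈ Zp, x + y ∈ Zp)
    (hZsmul : ∀ a : ℝ, 0 ≤ a → ∀ x ∈ Zp, a • x ∈ Zp)
    (hZcone : ∀ z : Z, z ∈ Zp → -z ∈ Zp → z = 0)
    (hZnormal : ∃ M : ℝ, 1 ≤ M ∧ ∀ x y : Z, x ∈ Zp → y - x ∈ Zp → ‖x‖ ≤ M * ‖y‖)
    (T : U →L[ℝ] Z) :
    (∃ a b : Z, ∀ u : U, ‖u‖ ≤ 1 → T u - a ∈ Zp ∧ b - T u ∈ Zp)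
      ↔
    (∃ (Xt : Type u) (_ : NormedAddCommGroup Xt) (_ : NormedSpace ℝ Xt)
        (_ : CompleteSpace Xt) (Xtp : Set Xt),
      IsClosed Xtp ∧ (0 : Xt) ∈ Xtp ∧
      (∀ x ∈ Xtp, ∀ y ∈ Xtp, x + y ∈ Xtp) ∧
      (∀ a : ℝ, 0 ≤ a → ∀ x ∈ Xtp, a • x ∈ Xtp) ∧
      (∀ x : Xt, x ∈ Xtp → -x ∈ Xtp → x = 0) ∧
      (∃ e ∈ Xtp, ∀ x : Xt, ∃ lam : ℝ, 0 < lam ∧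
          x + lam • e ∈ Xtp ∧ lam • e - x ∈ Xtp) ∧
      (∃ (T₁ : U →L[ℝ] Xt) (T₂ : Xt →L[ℝ] Z),
        (∀ x ∈ Xtp, T₂ x ∈ Zp) ∧ T = T₂.comp T₁)) :=
  stmt_11_general (pointedConeOfWedge Zp hZ0 hZadd hZsmul) T
end

section
/- Let U and Z be ordered Banach spaces and let T : U → Z be a positive bounded linear operator. If the closed unit ball of U is upwards directed and every increasing norm-bounded net of positive elements of Z is norm-convergent, then T maps the closed unit ball of U into an order-bounded subset of Z. -/
/-!
A net that is Cauchy along every increasing sequence of indices is Cauchy: otherwise one could keep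
moving up the index set by steps of a fixed size. If the sequences even converge, then so does the
net, to its limit along any increasing sequence of indices that passes the tails of size `1 / n`.
Since the unit ball is directed, `T` restricted to it is a bounded increasing net, so it converges.
Its limit dominates `T` on the ball, and the symmetry of the ball gives the lower bound.
-/

open Bornology Filter Set Topology Uniformity

section DirectedNets

variable {P X : Type*} [Preorder P]

lemma exists_monotone_seq_ge [IsDirectedOrder P] (p : ℕ → P) :
    ∃ x : ℕ → P, Monotone x ∧ ∀ n, p n ≤ x n := by
  choose join le_join_left le_join_right using exists_ge_ge (α := P)
  let x : ℕ → P := Nat.rec (p 0) fun n y ↦ join y (p (n + 1))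
  refine ⟨x, monotone_nat_of_le_succ fun n ↦ le_join_left _ _, fun n ↦ ?_⟩
  cases n with
  | zero => exact le_rfl
  | succ n => exact le_join_right _ _

variable [UniformSpace X] [Nonempty P] {f : P → X}

lemma exists_forall_ge_mem_entourage_of_cauchySeq_comp_monotone
    (hf : ∀ x : ℕ → P, Monotone x → CauchySeq (f ∘ x)) {V : Set (X × X)} (hV : V ∈ 𝓤 X) :
    ∃ p, ∀ q, p ≤ q → (f p, f q) ∈ V := by
  by_contra! hfar
  choose next le_next next_far using hfar
  let x : ℕ → P := fun n ↦ next^[n] (Classical.arbitrary P)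
  have x_succ (n : ℕ) : x (n + 1) = next (x n) := Function.iterate_succ_apply' next n _
  have x_mono : Monotone x := monotone_nat_of_le_succ fun n ↦ x_succ n ▸ le_next (x n)
  obtain ⟨N, hN⟩ := cauchySeq_iff.1 (hf x x_mono) V hV
  exact next_far (x N) (x_succ N ▸ hN N le_rfl (N + 1) N.le_succ)

lemma exists_forall_ge_ge_mem_entourage_of_cauchySeq_comp_monotone
    (hf : ∀ x : ℕ → P, Monotone x → CauchySeq (f ∘ x)) {V : Set (X × X)} (hV : V ∈ 𝓤 X) :
    ∃ p, ∀ q r, p ≤ q → p ≤ r → (f q, f r) ∈ V := by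
  obtain ⟨W, hW, W_symm, hWV⟩ := comp_symm_mem_uniformity_sets hV
  obtain ⟨p, hp⟩ := exists_forall_ge_mem_entourage_of_cauchySeq_comp_monotone hf hW
  exact ⟨p, fun q r hq hr ↦ hWV ⟨f p, W_symm.symm _ _ (hp q hq), hp r hr⟩⟩

theorem exists_tendsto_atTop_of_tendsto_comp_monotone
    [IsDirectedOrder P] [IsCountablyGenerated (𝓤 X)]
    (hf : ∀ x : ℕ → P, Monotone x → ∃ z, Tendsto (f ∘ x) atTop (𝓝 z)) :
    ∃ z, Tendsto f atTop (𝓝 z) := by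
  have hcauchy (x : ℕ → P) (hx : Monotone x) : CauchySeq (f ∘ x) := (hf x hx).choose_spec.cauchySeq
  obtain ⟨V, hV⟩ := (𝓤 X).exists_antitone_basis
  choose p hp using fun n ↦
    exists_forall_ge_ge_mem_entourage_of_cauchySeq_comp_monotone hcauchy (hV.mem n)
  obtain ⟨x, x_mono, p_le_x⟩ := exists_monotone_seq_ge p
  obtain ⟨z, hz⟩ := hf x x_mono
  refine ⟨z, le_nhds_of_cauchy_adhp_aux fun S hS ↦ ?_⟩
  obtain ⟨n, hn⟩ := hV.mem_iff.1 hS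
  obtain ⟨m, hm, hnm⟩ := ((hz.eventually (mem_nhds_left z hS)).and (eventually_ge_atTop n)).exists
  refine ⟨f '' Ici (p n), image_mem_map (Ici_mem_atTop _), ?_, f (x m), hm,
    mem_image_of_mem f ((p_le_x n).trans (x_mono hnm))⟩
  rintro ⟨_, _⟩ ⟨⟨q, hq, rfl⟩, r, hr, rfl⟩
  exact hn (hp n q r hq hr)

end DirectedNets

section OrderedGroups

variable {Z : Type*} [Preorder Z]

theorem exists_tendsto_atTop_of_monotone_of_isBounded_range
    [SeminormedAddCommGroup Z] [IsOrderedAddMonoid Z]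
    (hZ : ∀ g : ℕ → Z, (∀ n, 0 ≤ g n) → Monotone g → IsBounded (range g) →
      ∃ z, Tendsto g atTop (𝓝 z))
    {P : Type*} [Preorder P] [IsDirectedOrder P] [Nonempty P] {f : P → Z}
    (hf : Monotone f) (hbdd : IsBounded (range f)) : ∃ z, Tendsto f atTop (𝓝 z) := by
  refine exists_tendsto_atTop_of_tendsto_comp_monotone fun x hx ↦ ?_
  have hfx : Monotone (f ∘ x) := hf.comp hx
  have hshift : IsBounded (range fun n ↦ f (x n) - f (x 0)) :=
    (hbdd.sub (isBounded_singleton (x := f (x 0)))).subset <|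
      range_subset_iff.2 fun n ↦ sub_mem_sub (mem_range_self _) (mem_singleton _)
  obtain ⟨z, hz⟩ := hZ (fun n ↦ f (x n) - f (x 0)) (fun n ↦ sub_nonneg.2 (hfx n.zero_le))
    (fun m n hmn ↦ sub_le_sub_right (hfx hmn) _) hshift
  refine ⟨z + f (x 0), ?_⟩
  simpa only [Function.comp_def, sub_add_cancel] using hz.add_const (f (x 0))

lemma image_subset_Icc_of_neg_eq_self [AddCommGroup Z] [IsOrderedAddMonoid Z]
    {U : Type*} [AddGroup U] (T : U →+ Z) {s : Set U} (hs : -s = s) {b : Z}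
    (hb : ∀ u ∈ s, T u ≤ b) : T '' s ⊆ Icc (-b) b := by
  rintro _ ⟨u, hu, rfl⟩
  have hneg : T (-u) ≤ b := hb (-u) (by rwa [← Set.mem_neg, hs])
  exact ⟨neg_le.1 (map_neg T u ▸ hneg), hb u hu⟩

end OrderedGroups

section ConePreorder

variable {G : Type*} [AddCommGroup G]

/-- The preorder `x ≤ y ↔ y - x ∈ C` of a group with positive cone `C`. The cone is an arbitrary
additive submonoid, so it may contain nonzero elements together with their negatives. -/
abbrev conePreorder (C : AddSubmonoid G) : Preorder G where
  le x y := y - x ∈ C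
  le_refl x := by simp only [sub_self, C.zero_mem]
  le_trans x y z hxy hyz := by simpa only [sub_add_sub_cancel] using C.add_mem hyz hxy

lemma isOrderedAddMonoid_conePreorder (C : AddSubmonoid G) :
    letI := conePreorder C
    IsOrderedAddMonoid G :=
  letI := conePreorder C
  { add_le_add_left := fun x y hxy z ↦
      show y + z - (x + z) ∈ C by rwa [add_sub_add_right_eq_sub] }

lemma orderClosedTopology_conePreorder [TopologicalSpace G] [IsTopologicalAddGroup G]
    {C : AddSubmonoid G} (hC : IsClosed (C : Set G)) :
    letI := conePreorder C
    OrderClosedTopology G :=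
  letI := conePreorder C
  { isClosed_le' := hC.preimage (continuous_snd.sub continuous_fst) }

end ConePreorder

theorem stmt_14_general {U Z : Type*} [SeminormedAddCommGroup U] [SeminormedAddCommGroup Z]
    (Up : AddSubmonoid U) (Zp : AddSubmonoid Z) (hZclosed : IsClosed (Zp : Set Z))
    (T : NormedAddGroupHom U Z) (hTpos : ∀ u ∈ Up, T u ∈ Zp)
    (hUdirected : ∀ x₁ x₂ : U, ‖x₁‖ ≤ 1 → ‖x₂‖ ≤ 1 →
      ∃ x : U, ‖x‖ ≤ 1 ∧ x - x₁ ∈ Up ∧ x - x₂ ∈ Up)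
    (hZconv : ∀ g : ℕ → Z, (∀ n, g n ∈ Zp) → (∀ m n, m ≤ n → g n - g m ∈ Zp) →
      (∃ C : ℝ, ∀ n, ‖g n‖ ≤ C) → ∃ z : Z, Tendsto g atTop (𝓝 z)) :
    ∃ a b : Z, ∀ u : U, ‖u‖ ≤ 1 → T u - a ∈ Zp ∧ b - T u ∈ Zp := by
  let _ := conePreorder Up
  let _ := conePreorder Zp
  have := isOrderedAddMonoid_conePreorder Zp
  have := orderClosedTopology_conePreorder hZclosed
  let B : Set U := {u | ‖u‖ ≤ 1}
  have : Nonempty B := ⟨0, by simp [B]⟩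
  have : IsDirectedOrder B := ⟨fun x₁ x₂ ↦
    let ⟨x, hx, hx₁, hx₂⟩ := hUdirected x₁ x₂ x₁.2 x₂.2
    ⟨⟨x, hx⟩, hx₁, hx₂⟩⟩
  have hmono : Monotone fun u : B ↦ T u := fun x y hxy ↦
    show T y - T x ∈ Zp from map_sub T (y : U) x ▸ hTpos _ hxy
  have hbdd : IsBounded (range fun u : B ↦ T u) := isBounded_iff_forall_norm_le.2
    ⟨‖T‖ * 1, forall_mem_range.2 fun u ↦ T.le_opNorm_of_le u.2⟩
  obtain ⟨b, hb⟩ := exists_tendsto_atTop_of_monotone_of_isBounded_range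
    (fun g hpos hg hgbdd ↦ hZconv g (fun n ↦ sub_zero (g n) ▸ hpos n) (fun _ _ hmn ↦ hg hmn)
      (by simpa only [isBounded_iff_forall_norm_le, forall_mem_range] using hgbdd)) hmono hbdd
  have hIcc : T '' B ⊆ Icc (-b) b := image_subset_Icc_of_neg_eq_self T.toAddMonoidHom
    (by ext u; simp [B]) fun u hu ↦ hmono.ge_of_tendsto hb ⟨u, hu⟩
  exact ⟨-b, b, fun u hu ↦ hIcc (mem_image_of_mem T hu)⟩

/-- Let `U` and `Z` be ordered Banach spaces and let `T : U → Z` be a positive bounded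
linear operator.  If the closed unit ball of `U` is upwards directed and every
increasing norm-bounded net of positive elements of `Z` is norm-convergent, then `T`
maps the closed unit ball of `U` into an order-bounded subset of `Z`. -/
theorem stmt_14
    {U Z : Type*}
    [NormedAddCommGroup U] [NormedSpace ℝ U] [CompleteSpace U]
    [NormedAddCommGroup Z] [NormedSpace ℝ Z] [CompleteSpace Z]
    (Up : Set U) (hUclosed : IsClosed Up) (hU0 : (0 : U) ∈ Up)
    (hUadd : ∀ x ∈ Up, ∀ y ∈ Up, x + y ∈ Up)
    (hUsmul : ∀ a : ℝ, 0 ≤ a → ∀ x ∈ Up, a • x ∈ Up)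
    (hUcone : ∀ x : U, x ∈ Up → -x ∈ Up → x = 0)
    (Zp : Set Z) (hZclosed : IsClosed Zp) (hZ0 : (0 : Z) ∈ Zp)
    (hZadd : ∀ x ∈ Zp, ∀ y ∈ Zp, x + y ∈ Zp)
    (hZsmul : ∀ a : ℝ, 0 ≤ a → ∀ x ∈ Zp, a • x ∈ Zp)
    (hZcone : ∀ z : Z, z ∈ Zp → -z ∈ Zp → z = 0)
    (T : U →L[ℝ] Z)
    (hTpos : ∀ u ∈ Up, T u ∈ Zp)
    (hUdirected : ∀ x₁ x₂ : U, ‖x₁‖ ≤ 1 → ‖x₂‖ ≤ 1 →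
      ∃ x : U, ‖x‖ ≤ 1 ∧ x - x₁ ∈ Up ∧ x - x₂ ∈ Up)
    (hZconv : ∀ (ι : Type u) [Preorder ι] [Nonempty ι] [IsDirected ι (· ≤ ·)] (g : ι → Z),
      (∀ i, g i ∈ Zp) → (∀ i j : ι, i ≤ j → g j - g i ∈ Zp) →
      (∃ C : ℝ, ∀ i, ‖g i‖ ≤ C) →
      ∃ z : Z, Filter.Tendsto g Filter.atTop (nhds z)) :
    ∃ a b : Z, ∀ u : U, ‖u‖ ≤ 1 → T u - a ∈ Zp ∧ b - T u ∈ Zp :=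
  stmt_14_general ⟨⟨Up, fun hx hy ↦ hUadd _ hx _ hy⟩, hU0⟩ ⟨⟨Zp, fun hx hy ↦ hZadd _ hx _ hy⟩, hZ0⟩
    hZclosed (T.toLinearMap.toAddMonoidHom.mkNormedAddGroupHom ‖T‖ T.le_opNorm) hTpos hUdirected
    fun g hpos hg hbdd ↦ (hZconv (ULift ℕ) (g ∘ ULift.down) (fun i ↦ hpos i.down)
      (fun i j hij ↦ hg i.down j.down hij) (hbdd.imp fun _ hC i ↦ hC i.down)).imp
        fun _ hz ↦ hz.comp (ULift.orderIso (α := ℕ)).symm.tendsto_atTop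
end
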